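/- arXiv:1803.09266 — 11 statements merged into one kernel-verified Lean document; each statement's English description precedes it below -/
import Mathlib

section
/- Let n₁, n₂ be positive integers, V₁ = {1,…,n₁}, V₂ = {1,…,n₂}, E ⊆ V₁ × V₂, and let q : E → ℝ, a : V₁ → ℝ, b : V₂ → ℝ, c ∈ ℝ. Define S = {(x,y,w) ∈ [0,1]^{n₁+n₂+|E|} : Σ_{(i,j)∈E} q_{ij} w_{ij} + Σ_{i∈V₁} a_i x_i + Σ_{j∈V₂} b_j y_j + c = 0 and w_{ij} = x_i y_j for all (i,j) ∈ E}. If (x̄,ȳ,w̄) is an extreme point of S, then there exists a set U ⊆ V₁ ∪ V₂ of one of the following forms: (a) U = {i₀, j₀} with (i₀,j₀) ∈ E, or (b) U = {i₀} with i₀ ∈ V₁ incident to no edge of E, or (c) U = {j₀} with j₀ ∈ V₂ incident to no edge of E, such that x̄_i ∈ {0,1} for every i ∈ V₁ \ U and ȳ_j ∈ {0,1} for every j ∈ V₂ \ U. -/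
/-!
Let `z` be the vertex part of an extreme point. Perturbing `z` along a direction `δ` supported on an
independent set of vertices changes every product `z u * z v` over an edge `uv` linearly in `δ`, so
the feasible set contains a segment around the extreme point as soon as `δ` lives on coordinates in
the open interval `(0, 1)`, is small, and solves the linear system to first order. With more
fractional vertices in the independent set than equations, such a `δ ≠ 0` exists by rank-nullity.
Hence for a single equation the fractional vertices form a clique, and a clique of a bipartite graph
is an edge, a vertex, or empty.
-/

section OrderedField

variable {𝕜 : Type*} [Field 𝕜] [LinearOrder 𝕜] [IsStrictOrderedRing 𝕜]

lemma exists_pos_forall_mul_abs_le {V : Type*} (s : Finset V) (δ m : V → 𝕜)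
    (hm : ∀ v ∈ s, 0 < m v) : ∃ r : 𝕜, 0 < r ∧ ∀ v ∈ s, r * |δ v| ≤ m v := by
  classical
  induction s using Finset.induction_on with
  | empty => exact ⟨1, one_pos, by simp⟩
  | insert v s _ ih =>
    obtain ⟨r, hr, hrs⟩ := ih fun u hu => hm u (Finset.mem_insert_of_mem hu)
    obtain ⟨r', hr', hrv⟩ := exists_pos_mul_lt (hm v (Finset.mem_insert_self v s)) |δ v|
    refine ⟨min r r', lt_min hr hr', (Finset.forall_mem_insert ..).2 ⟨?_, fun u hu => ?_⟩⟩
    · calc min r r' * |δ v| ≤ r' * |δ v| := by gcongr; exact min_le_right r r'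
        _ ≤ m v := by rw [mul_comm]; exact hrv.le
    · calc min r r' * |δ u| ≤ r * |δ u| := by gcongr; exact min_le_left r r'
        _ ≤ m u := hrs u hu

lemma eq_zero_of_add_mem_of_sub_mem_of_mem_extremePoints {M : Type*} [AddCommGroup M] [Module 𝕜 M]
    {A : Set M} {x d : M} (hx : x ∈ A.extremePoints 𝕜) (hadd : x + d ∈ A) (hsub : x - d ∈ A) :
    d = 0 :=
  add_eq_left.1 (hx.2 hadd hsub (mem_openSegment_add_sub x d))

end OrderedField

lemma exists_ne_zero_map_eq_zero_of_finrank_lt_card {𝕜 V W : Type*} [Field 𝕜]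
    [AddCommGroup W] [Module 𝕜 W] [FiniteDimensional 𝕜 W] (K : (V → 𝕜) →ₗ[𝕜] W) {s : Finset V}
    (hs : Module.finrank 𝕜 W < s.card) :
    ∃ δ : V → 𝕜, δ ≠ 0 ∧ (∀ v ∉ s, δ v = 0) ∧ K δ = 0 := by
  let extend : (s → 𝕜) →ₗ[𝕜] V → 𝕜 := Function.ExtendByZero.linearMap 𝕜 Subtype.val
  have hextend : Function.Injective extend :=
    Function.extend_injective Subtype.val_injective (0 : V → 𝕜)
  have hker : (K ∘ₗ extend).ker ≠ ⊥ := LinearMap.ker_ne_bot_of_finrank_lt (by simpa using hs)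
  obtain ⟨γ, hγ, hγ_ne⟩ := Submodule.exists_mem_ne_zero_of_ne_bot hker
  refine ⟨extend γ, (map_ne_zero_iff extend hextend).2 hγ_ne, fun v hv => ?_, hγ⟩
  exact Function.extend_apply' _ _ _ (by simpa using hv)

section EdgeProductSet

/-- The points `(z, w)` with `z` in the unit cube whose edge coordinates `w` are the products of the
values of `z` at the two ends of each edge, subject to the linear system `L (z, w) + c = 0`. The
multigraph on the vertex type `V` is given by the map `edge` sending an edge to its ends, and the
number of equations is the dimension of `W`. -/
def edgeProductSet {𝕜 V ε W : Type*} [CommRing 𝕜] [Preorder 𝕜] [AddCommGroup W] [Module 𝕜 W]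
    (edge : ε → V × V) (L : (V → 𝕜) × (ε → 𝕜) →ₗ[𝕜] W) (c : W) : Set ((V → 𝕜) × (ε → 𝕜)) :=
  {p | (∀ v, p.1 v ∈ Set.Icc 0 1) ∧ (∀ e, p.2 e = p.1 (edge e).1 * p.1 (edge e).2) ∧ L p + c = 0}

/-- The derivative at `z` of the parametrization `z ↦ (z, fun e ↦ z (edge e).1 * z (edge e).2)` of
the points with consistent edge coordinates. -/
def edgeProductDeriv {𝕜 V ε : Type*} [CommRing 𝕜] (edge : ε → V × V) (z : V → 𝕜) :
    (V → 𝕜) →ₗ[𝕜] (V → 𝕜) × (ε → 𝕜) :=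
  LinearMap.id.prod <| LinearMap.pi fun e =>
    z (edge e).2 • LinearMap.proj (edge e).1 + z (edge e).1 • LinearMap.proj (edge e).2

variable {𝕜 V ε W : Type*} [Field 𝕜] [LinearOrder 𝕜] [IsStrictOrderedRing 𝕜] [AddCommGroup W]
  [Module 𝕜 W] {edge : ε → V × V} {L : (V → 𝕜) × (ε → 𝕜) →ₗ[𝕜] W} {c : W}
  {p : (V → 𝕜) × (ε → 𝕜)}

lemma add_edgeProductDeriv_mem_edgeProductSet (hp : p ∈ edgeProductSet edge L c) {δ : V → 𝕜}
    (hδ : ∀ v, |δ v| ≤ min (p.1 v) (1 - p.1 v))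
    (hedge : ∀ e, δ (edge e).1 * δ (edge e).2 = 0)
    (hL : L (edgeProductDeriv edge p.1 δ) = 0) :
    p + edgeProductDeriv edge p.1 δ ∈ edgeProductSet edge L c := by
  obtain ⟨-, hprod, hrow⟩ := hp
  refine ⟨fun v => ?_, fun e => ?_, ?_⟩
  · obtain ⟨hlo, hhi⟩ := le_min_iff.1 (hδ v)
    change p.1 v + δ v ∈ Set.Icc 0 1
    constructor
    · linarith [neg_abs_le (δ v)]
    · linarith [le_abs_self (δ v)]
  · change p.2 e + (p.1 (edge e).2 * δ (edge e).1 + p.1 (edge e).1 * δ (edge e).2) =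
      (p.1 (edge e).1 + δ (edge e).1) * (p.1 (edge e).2 + δ (edge e).2)
    linear_combination hprod e - hedge e
  · rw [map_add, hL, add_zero, hrow]

lemma eq_zero_of_mem_extremePoints_edgeProductSet
    (hp : p ∈ (edgeProductSet edge L c).extremePoints 𝕜) {δ : V → 𝕜}
    (hδ : ∀ v, |δ v| ≤ min (p.1 v) (1 - p.1 v))
    (hedge : ∀ e, δ (edge e).1 * δ (edge e).2 = 0)
    (hL : L (edgeProductDeriv edge p.1 δ) = 0) : δ = 0 := by
  have hadd := add_edgeProductDeriv_mem_edgeProductSet hp.1 hδ hedge hL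
  have hsub := add_edgeProductDeriv_mem_edgeProductSet hp.1 (δ := -δ) (by simpa using hδ)
    (by simpa using hedge) (by rw [map_neg, map_neg, hL, neg_zero])
  rw [map_neg, ← sub_eq_add_neg] at hsub
  exact congrArg Prod.fst (eq_zero_of_add_mem_of_sub_mem_of_mem_extremePoints hp hadd hsub)

theorem card_le_finrank_of_mem_extremePoints_edgeProductSet [FiniteDimensional 𝕜 W]
    (hp : p ∈ (edgeProductSet edge L c).extremePoints 𝕜) {s : Finset V}
    (hfrac : ∀ v ∈ s, p.1 v ∉ ({0, 1} : Set 𝕜))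
    (hindep : ∀ e, (edge e).1 ∉ s ∨ (edge e).2 ∉ s) : s.card ≤ Module.finrank 𝕜 W := by
  by_contra! hcard
  obtain ⟨δ, hδ, hsupp, hker⟩ := exists_ne_zero_map_eq_zero_of_finrank_lt_card
    (L ∘ₗ edgeProductDeriv edge p.1) hcard
  have hmin_nonneg (v : V) : 0 ≤ min (p.1 v) (1 - p.1 v) :=
    le_min (hp.1.1 v).1 (sub_nonneg.2 (hp.1.1 v).2)
  have hmin_pos : ∀ v ∈ s, 0 < min (p.1 v) (1 - p.1 v) := by
    intro v hv
    obtain ⟨hne_zero, hne_one⟩ := not_or.1 (hfrac v hv)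
    exact lt_min ((hp.1.1 v).1.lt_of_ne' hne_zero)
      (sub_pos.2 ((hp.1.1 v).2.lt_of_ne hne_one))
  obtain ⟨r, hr, hle⟩ := exists_pos_forall_mul_abs_le s δ _ hmin_pos
  have hrδ : r • δ = 0 := by
    refine eq_zero_of_mem_extremePoints_edgeProductSet hp (fun v => ?_) (fun e => ?_) ?_
    · by_cases hv : v ∈ s
      · simpa [abs_mul, abs_of_pos hr] using hle v hv
      · simpa [hsupp v hv] using hmin_nonneg v
    · rcases hindep e with he | he <;> simp [hsupp _ he]
    · rw [map_smul, map_smul, ← LinearMap.comp_apply, hker, smul_zero]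
  exact hδ ((smul_eq_zero.1 hrδ).resolve_left hr.ne')

theorem pairwise_exists_edge_of_mem_extremePoints_edgeProductSet
    {L : (V → 𝕜) × (ε → 𝕜) →ₗ[𝕜] 𝕜} {c : 𝕜} (hloop : ∀ e, (edge e).1 ≠ (edge e).2)
    (hp : p ∈ (edgeProductSet edge L c).extremePoints 𝕜) :
    {v | p.1 v ∉ ({0, 1} : Set 𝕜)}.Pairwise fun u v => ∃ e, edge e = (u, v) ∨ edge e = (v, u) := by
  classical
  intro u hu v hv huv
  by_contra! hno_edge
  have hcard : ({u, v} : Finset V).card ≤ Module.finrank 𝕜 𝕜 := by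
    refine card_le_finrank_of_mem_extremePoints_edgeProductSet hp
      (by simpa using And.intro hu hv) fun e => ?_
    grind
  rw [Finset.card_pair huv, Module.finrank_self] at hcard
  omega

end EdgeProductSet

section Bipartite

/-- The bipartite form of `edgeProductSet`, with the vertex coordinates `z` split into the two
colour classes: points `(x, y, w)` with `x`, `y` in unit cubes, `w` the edge products, and
`L (x, y, w) + c = 0`. -/
def bipartiteProductSet {𝕜 ι κ ε W : Type*} [CommRing 𝕜] [Preorder 𝕜] [AddCommGroup W]
    [Module 𝕜 W] (edge : ε → ι × κ) (L : (ι → 𝕜) × (κ → 𝕜) × (ε → 𝕜) →ₗ[𝕜] W) (c : W) :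
    Set ((ι → 𝕜) × (κ → 𝕜) × (ε → 𝕜)) :=
  {p | (∀ i, p.1 i ∈ Set.Icc 0 1) ∧ (∀ j, p.2.1 j ∈ Set.Icc 0 1) ∧
    (∀ e, p.2.2 e = p.1 (edge e).1 * p.2.1 (edge e).2) ∧ L p + c = 0}

/-- Joining the coordinates of the two colour classes of a bipartite graph into one vector indexed
by all vertices. -/
def joinVertices (𝕜 ι κ ε : Type*) [CommRing 𝕜] :
    ((ι → 𝕜) × (κ → 𝕜) × (ε → 𝕜)) ≃ₗ[𝕜] (ι ⊕ κ → 𝕜) × (ε → 𝕜) :=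
  (LinearEquiv.prodAssoc 𝕜 (ι → 𝕜) (κ → 𝕜) (ε → 𝕜)).symm ≪≫ₗ
    (LinearEquiv.sumArrowLequivProdArrow ι κ 𝕜 𝕜).symm.prodCongr (LinearEquiv.refl 𝕜 (ε → 𝕜))

lemma joinVertices_apply {𝕜 ι κ ε : Type*} [CommRing 𝕜] (x : ι → 𝕜) (y : κ → 𝕜) (w : ε → 𝕜) :
    joinVertices 𝕜 ι κ ε (x, y, w) = (Sum.elim x y, w) :=
  rfl

lemma image_joinVertices_bipartiteProductSet {𝕜 ι κ ε W : Type*} [CommRing 𝕜] [Preorder 𝕜]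
    [AddCommGroup W] [Module 𝕜 W] (edge : ε → ι × κ)
    (L : (ι → 𝕜) × (κ → 𝕜) × (ε → 𝕜) →ₗ[𝕜] W) (c : W) :
    joinVertices 𝕜 ι κ ε '' bipartiteProductSet edge L c =
      edgeProductSet (Prod.map Sum.inl Sum.inr ∘ edge) (L ∘ₗ (joinVertices 𝕜 ι κ ε).symm) c := by
  ext p
  obtain ⟨⟨x, y, w⟩, rfl⟩ := (joinVertices 𝕜 ι κ ε).surjective p
  rw [(joinVertices 𝕜 ι κ ε).injective.mem_set_image]
  simp only [bipartiteProductSet, edgeProductSet, Set.mem_ofPred_eq, LinearMap.comp_apply,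
    LinearEquiv.coe_coe, LinearEquiv.symm_apply_apply]
  simp [joinVertices_apply, and_assoc]

lemma exists_edge_or_isolated_of_compl_clique {ι κ : Type*} [Nonempty (ι ⊕ κ)] {E : Set (ι × κ)}
    {X : Set ι} {Y : Set κ} (hX : Xᶜ.Subsingleton) (hY : Yᶜ.Subsingleton)
    (hXY : ∀ i ∉ X, ∀ j ∉ Y, (i, j) ∈ E) :
    (∃ i₀ j₀, (i₀, j₀) ∈ E ∧ (∀ i, i ≠ i₀ → i ∈ X) ∧ (∀ j, j ≠ j₀ → j ∈ Y)) ∨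
    (∃ i₀, (∀ j, (i₀, j) ∉ E) ∧ (∀ i, i ≠ i₀ → i ∈ X) ∧ (∀ j, j ∈ Y)) ∨
    (∃ j₀, (∀ i, (i, j₀) ∉ E) ∧ (∀ i, i ∈ X) ∧ (∀ j, j ≠ j₀ → j ∈ Y)) := by
  have mem_left_of_ne {i₀ : ι} (hi₀ : i₀ ∉ X) (i : ι) (hi : i ≠ i₀) : i ∈ X :=
    by_contra fun hiX => hi (hX hiX hi₀)
  have mem_right_of_ne {j₀ : κ} (hj₀ : j₀ ∉ Y) (j : κ) (hj : j ≠ j₀) : j ∈ Y :=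
    by_contra fun hjY => hj (hY hjY hj₀)
  suffices hcover : (∃ i₀ j₀, (i₀, j₀) ∈ E ∧ (∀ i, i ≠ i₀ → i ∈ X) ∧ (∀ j, j ≠ j₀ → j ∈ Y)) ∨
      (∃ i₀, (∀ i, i ≠ i₀ → i ∈ X) ∧ ∀ j, j ∈ Y) ∨ (∃ j₀, (∀ i, i ∈ X) ∧ ∀ j, j ≠ j₀ → j ∈ Y) by
    rcases hcover with hedge | ⟨i₀, hi₀, hYall⟩ | ⟨j₀, hXall, hj₀⟩
    · exact .inl hedge
    · by_cases hE : ∃ j₀, (i₀, j₀) ∈ E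
      · exact .inl (hE.elim fun j₀ he => ⟨i₀, j₀, he, hi₀, fun j _ => hYall j⟩)
      · exact .inr (.inl ⟨i₀, not_exists.1 hE, hi₀, hYall⟩)
    · by_cases hE : ∃ i₀, (i₀, j₀) ∈ E
      · exact .inl (hE.elim fun i₀ he => ⟨i₀, j₀, he, fun i _ => hXall i, hj₀⟩)
      · exact .inr (.inr ⟨j₀, not_exists.1 hE, hXall, hj₀⟩)
  by_cases hXall : ∀ i, i ∈ X <;> by_cases hYall : ∀ j, j ∈ Y
  · obtain ⟨i₀ | j₀⟩ := ‹Nonempty (ι ⊕ κ)›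
    · exact .inr (.inl ⟨i₀, fun i _ => hXall i, hYall⟩)
    · exact .inr (.inr ⟨j₀, hXall, fun j _ => hYall j⟩)
  · obtain ⟨j₀, hj₀⟩ := not_forall.1 hYall
    exact .inr (.inr ⟨j₀, hXall, mem_right_of_ne hj₀⟩)
  · obtain ⟨i₀, hi₀⟩ := not_forall.1 hXall
    exact .inr (.inl ⟨i₀, mem_left_of_ne hi₀, hYall⟩)
  · obtain ⟨i₀, hi₀⟩ := not_forall.1 hXall
    obtain ⟨j₀, hj₀⟩ := not_forall.1 hYall
    exact .inl ⟨i₀, j₀, hXY i₀ hi₀ j₀ hj₀, mem_left_of_ne hi₀, mem_right_of_ne hj₀⟩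

theorem extreme_points_of_single_row_BBP_general {𝕜 ι κ ε : Type*} [Field 𝕜] [LinearOrder 𝕜]
    [IsStrictOrderedRing 𝕜] [Nonempty (ι ⊕ κ)] (edge : ε → ι × κ)
    (L : (ι → 𝕜) × (κ → 𝕜) × (ε → 𝕜) →ₗ[𝕜] 𝕜) (c : 𝕜) (p : (ι → 𝕜) × (κ → 𝕜) × (ε → 𝕜))
    (hp : p ∈ (bipartiteProductSet edge L c).extremePoints 𝕜) :
    (∃ i₀ j₀, (i₀, j₀) ∈ Set.range edge ∧
      (∀ i, i ≠ i₀ → p.1 i ∈ ({0, 1} : Set 𝕜)) ∧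
      (∀ j, j ≠ j₀ → p.2.1 j ∈ ({0, 1} : Set 𝕜))) ∨
    (∃ i₀, (∀ j, (i₀, j) ∉ Set.range edge) ∧
      (∀ i, i ≠ i₀ → p.1 i ∈ ({0, 1} : Set 𝕜)) ∧
      (∀ j, p.2.1 j ∈ ({0, 1} : Set 𝕜))) ∨
    (∃ j₀, (∀ i, (i, j₀) ∉ Set.range edge) ∧
      (∀ i, p.1 i ∈ ({0, 1} : Set 𝕜)) ∧
      (∀ j, j ≠ j₀ → p.2.1 j ∈ ({0, 1} : Set 𝕜))) := by
  have hjoin := Set.mem_image_of_mem (joinVertices 𝕜 ι κ ε) hp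
  rw [image_extremePoints, image_joinVertices_bipartiteProductSet] at hjoin
  have hclique := pairwise_exists_edge_of_mem_extremePoints_edgeProductSet (by simp) hjoin
  refine exists_edge_or_isolated_of_compl_clique (X := p.1 ⁻¹' {0, 1}) (Y := p.2.1 ⁻¹' {0, 1})
    (fun i hi i' hi' => ?_) (fun j hj j' hj' => ?_) fun i hi j hj => ?_
  · by_contra hne
    simpa [Prod.ext_iff] using hclique (x := .inl i) hi (y := .inl i') hi' (by simpa using hne)
  · by_contra hne
    simpa [Prod.ext_iff] using hclique (x := .inr j) hj (y := .inr j') hj' (by simpa using hne)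
  · simpa [Prod.ext_iff] using hclique (x := .inl i) hi (y := .inr j) hj (by simp)

end Bipartite

section FiniteRow

variable {𝕜 ι κ : Type*} [CommRing 𝕜] [Fintype ι] [Fintype κ]

/-- The linear part `(x, y, w) ↦ ∑ q w + ∑ a x + ∑ b y` of a bilinear equation. -/
def rowFunctional {ε : Type*} [Fintype ε] (q : ε → 𝕜) (a : ι → 𝕜) (b : κ → 𝕜) :
    (ι → 𝕜) × (κ → 𝕜) × (ε → 𝕜) →ₗ[𝕜] 𝕜 :=
  (dotProductBilin 𝕜 𝕜 a).coprod ((dotProductBilin 𝕜 𝕜 b).coprod (dotProductBilin 𝕜 𝕜 q))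

lemma rowSet_eq_bipartiteProductSet [PartialOrder 𝕜] [IsOrderedRing 𝕜]
    (E : Finset (ι × κ)) (q : ι × κ → 𝕜) (a : ι → 𝕜) (b : κ → 𝕜) (c : 𝕜) :
    {p : (ι → 𝕜) × (κ → 𝕜) × (↥E → 𝕜) |
        (∀ i, p.1 i ∈ Set.Icc (0 : 𝕜) 1) ∧ (∀ j, p.2.1 j ∈ Set.Icc (0 : 𝕜) 1) ∧
        (∀ e : ↥E, p.2.2 e ∈ Set.Icc (0 : 𝕜) 1) ∧
        (∑ e : ↥E, q e.1 * p.2.2 e) + (∑ i, a i * p.1 i) + (∑ j, b j * p.2.1 j) + c = 0 ∧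
        ∀ e : ↥E, p.2.2 e = p.1 (e : ι × κ).1 * p.2.1 (e : ι × κ).2} =
      bipartiteProductSet Subtype.val (rowFunctional (fun e : ↥E => q e) a b) c := by
  ext ⟨x, y, w⟩
  have hrow : rowFunctional (fun e : ↥E => q e) a b (x, y, w) =
      (∑ e : ↥E, q e.1 * w e) + (∑ i, a i * x i) + (∑ j, b j * y j) := by
    simp only [rowFunctional, LinearMap.coprod_apply, dotProductBilin_apply_apply, dotProduct]
    ring
  constructor
  · rintro ⟨hx, hy, -, hsum, hw⟩
    exact ⟨hx, hy, hw, by rw [hrow]; exact hsum⟩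
  · rintro ⟨hx, hy, hw, hsum⟩
    refine ⟨hx, hy, fun e => ?_, by rw [hrow] at hsum; exact hsum, hw⟩
    rw [hw e]
    exact ⟨mul_nonneg (hx _).1 (hy _).1, mul_le_one₀ (hx _).2 (hy _).1 (hy _).2⟩

end FiniteRow

/-- At any extreme point of the single-row BBP set
`S = {(x,y,w) ∈ [0,1]^{n₁+n₂+|E|} : Σ q_{ij} w_{ij} + Σ a_i x_i + Σ b_j y_j + c = 0,
 w_{ij} = x_i y_j}`, all but the coordinates indexed by a set `U` — which is either a pair
`{i₀,j₀}` with `(i₀,j₀) ∈ E`, or an isolated node of `V₁`, or an isolated node of `V₂` —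
take values in `{0,1}`. -/
theorem extreme_points_of_single_row_BBP (n₁ n₂ : ℕ) (hn₁ : 0 < n₁) (hn₂ : 0 < n₂)
    (E : Finset (Fin n₁ × Fin n₂)) (q : Fin n₁ × Fin n₂ → ℝ)
    (a : Fin n₁ → ℝ) (b : Fin n₂ → ℝ) (c : ℝ)
    (S : Set ((Fin n₁ → ℝ) × (Fin n₂ → ℝ) × (↥E → ℝ)))
    (hS : S = {p | (∀ i, p.1 i ∈ Set.Icc (0:ℝ) 1) ∧ (∀ j, p.2.1 j ∈ Set.Icc (0:ℝ) 1) ∧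
        (∀ e : ↥E, p.2.2 e ∈ Set.Icc (0:ℝ) 1) ∧
        (∑ e : ↥E, q e.1 * p.2.2 e) + (∑ i, a i * p.1 i) + (∑ j, b j * p.2.1 j) + c = 0 ∧
        ∀ e : ↥E, p.2.2 e = p.1 (e : Fin n₁ × Fin n₂).1 * p.2.1 (e : Fin n₁ × Fin n₂).2})
    (p : (Fin n₁ → ℝ) × (Fin n₂ → ℝ) × (↥E → ℝ))
    (hp : p ∈ Set.extremePoints ℝ S) :
    (∃ i₀ j₀, (i₀, j₀) ∈ E ∧
      (∀ i, i ≠ i₀ → p.1 i ∈ ({0, 1} : Set ℝ)) ∧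
      (∀ j, j ≠ j₀ → p.2.1 j ∈ ({0, 1} : Set ℝ))) ∨
    (∃ i₀ : Fin n₁, (∀ j, (i₀, j) ∉ E) ∧
      (∀ i, i ≠ i₀ → p.1 i ∈ ({0, 1} : Set ℝ)) ∧
      (∀ j, p.2.1 j ∈ ({0, 1} : Set ℝ))) ∨
    (∃ j₀ : Fin n₂, (∀ i, (i, j₀) ∉ E) ∧
      (∀ i, p.1 i ∈ ({0, 1} : Set ℝ)) ∧
      (∀ j, j ≠ j₀ → p.2.1 j ∈ ({0, 1} : Set ℝ))) := by
  have : Nonempty (Fin n₁) := ⟨⟨0, hn₁⟩⟩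
  rw [hS, rowSet_eq_bipartiteProductSet] at hp
  simpa only [Subtype.range_coe_subtype, Set.mem_ofPred_eq] using
    extreme_points_of_single_row_BBP_general _ _ _ p hp
end

section
/- Let n₁, n₂ be positive integers, V₁ = {1,…,n₁}, V₂ = {1,…,n₂}, E ⊆ V₁ × V₂, and let q : E → ℝ, a : V₁ → ℝ, b : V₂ → ℝ, c ∈ ℝ. Define S = {(x,y,w) ∈ [0,1]^{n₁+n₂+|E|} : Σ_{(i,j)∈E} q_{ij} w_{ij} + Σ_{i∈V₁} a_i x_i + Σ_{j∈V₂} b_j y_j + c = 0 and w_{ij} = x_i y_j for all (i,j) ∈ E}. For each set U ⊆ V₁ ∪ V₂ of one of the forms (a) U = {i₀, j₀} with (i₀,j₀) ∈ E, (b) U = {i₀} with i₀ ∈ V₁ incident to no edge of E, (c) U = {j₀} with j₀ ∈ V₂ incident to no edge of E, and each 0/1 assignment σ : (V₁ ∪ V₂) \ U → {0,1}, let S_{U,σ} = {(x,y,w) ∈ S : x_i = σ(i) for all i ∈ V₁ \ U, y_j = σ(j) for all j ∈ V₂ \ U}. Then the convex hull of S equals the convex hull of the union of all the sets S_{U,σ}.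 -/
/-!
Write `z = (x, y)`. If two distinct coordinates `u`, `v` of `z` are fractional and `uv` is not an
edge, then every product `xᵢ yⱼ` with `(i, j) ∈ E` is affine on the plane through `z` spanned by
`u` and `v`, so that plane contains a line through `z` along which the constraint stays satisfied
and the lifted point `(x, y, w)` moves affinely. Following the line both ways until a fractional
coordinate becomes `0` or `1` exhibits the lifted point as a convex combination of two points with
fewer fractional coordinates. The process stops when the fractional coordinates form a clique of
the bipartite graph, that is, when they lie in an edge or there is at most one of them.
-/

open Function Set

theorem mem_of_convex_of_add_smul_mem_of_sub_smul_mem {𝕜 M : Type*} [Field 𝕜] [LinearOrder 𝕜]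
    [IsStrictOrderedRing 𝕜] [AddCommGroup M] [Module 𝕜 M] {C : Set M} (hC : Convex 𝕜 C)
    {p v : M} {s t : 𝕜} (hs : 0 < s) (ht : 0 < t) (hadd : p + s • v ∈ C)
    (hsub : p - t • v ∈ C) : p ∈ C := by
  have hst : s + t ≠ 0 := (add_pos hs ht).ne'
  have hcomb : (t / (s + t)) • (p + s • v) + (s / (s + t)) • (p - t • v) = p := by
    match_scalars <;> field_simp <;> ring
  rw [← hcomb]
  exact hC hadd hsub (by positivity) (by positivity) (by field_simp; ring)

theorem exists_ne_zero_support_subset_pair_map_eq_zero {ι R : Type*} [CommRing R] [Nontrivial R]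
    (L : (ι → R) →ₗ[R] R) {u v : ι} (huv : u ≠ v) :
    ∃ d : ι → R, d ≠ 0 ∧ support d ⊆ {u, v} ∧ L d = 0 := by
  classical
  by_cases hLu : L (Pi.single u 1) = 0
  · exact ⟨Pi.single u 1, by simp, Pi.support_single_subset.trans (by simp), hLu⟩
  · refine ⟨L (Pi.single u 1) • Pi.single v 1 - L (Pi.single v 1) • Pi.single u 1, ?_, ?_, ?_⟩
    · exact ne_iff.2 ⟨v, by simpa [huv.symm] using hLu⟩
    · refine support_subset_iff'.2 fun w hw => ?_
      obtain ⟨hwu, hwv⟩ : w ≠ u ∧ w ≠ v := by simpa using hw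
      simp [hwu, hwv]
    · simp [mul_comm]

theorem exists_forall_mem_and_eqOn {ι γ : Type*} {s : Set ι} {t : Set γ} (ht : t.Nonempty)
    {f : ι → γ} (hf : MapsTo f s t) : ∃ g : ι → γ, (∀ i, g i ∈ t) ∧ EqOn f g s := by
  classical
  obtain ⟨a, ha⟩ := ht
  refine ⟨s.piecewise f fun _ => a, fun i => ?_, (piecewise_eqOn s f _).symm⟩
  by_cases hi : i ∈ s
  · simpa [hi] using hf hi
  · simpa [hi] using ha

section Cube

/-- The set of fractional coordinates of a point `z` of the cube `[0, 1]^ι`: those at which `z` is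
neither `0` nor `1`. -/
def fractionalSupport {ι R : Type*} [Zero R] [One R] [Preorder R] (z : ι → R) : Set ι :=
  {v | z v ∈ Ioo 0 1}

theorem apply_mem_zero_one_of_notMem_fractionalSupport {ι R : Type*} [Zero R] [One R]
    [PartialOrder R] {z : ι → R} (hz : z ∈ Icc 0 1) {v : ι} (hv : v ∉ fractionalSupport z) :
    z v ∈ ({0, 1} : Set R) := by
  by_contra h
  obtain ⟨h0, h1⟩ : z v ≠ 0 ∧ z v ≠ 1 := by simpa using h
  exact hv ⟨(hz.1 v).lt_of_ne' h0, (hz.2 v).lt_of_ne h1⟩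

variable {ι 𝕜 : Type*} [Field 𝕜] [LinearOrder 𝕜] [IsStrictOrderedRing 𝕜]

theorem exists_step_to_boundary_of_mem_Ioo {x d : 𝕜} (hx : x ∈ Ioo 0 1) (hd : d ≠ 0) :
    ∃ r, 0 < r ∧ (∀ t ∈ Icc 0 r, x + t * d ∈ Icc 0 1) ∧ x + r * d ∉ Ioo 0 1 := by
  obtain ⟨hx0, hx1⟩ := hx
  rcases hd.lt_or_gt with hneg | hpos
  · refine ⟨x / -d, div_pos hx0 (neg_pos.2 hneg), fun t ht => ?_, fun h => h.1.ne' ?_⟩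
    · have ht' := (le_div_iff₀ (neg_pos.2 hneg)).1 ht.2
      have htd := mul_nonpos_of_nonneg_of_nonpos ht.1 hneg.le
      exact ⟨by linarith, by linarith⟩
    · field_simp
      ring
  · refine ⟨(1 - x) / d, div_pos (sub_pos.2 hx1) hpos, fun t ht => ?_, fun h => h.2.ne ?_⟩
    · have ht' := (le_div_iff₀ hpos).1 ht.2
      have htd := mul_nonneg ht.1 hpos.le
      exact ⟨by linarith, by linarith⟩
    · field_simp
      ring

theorem exists_add_smul_mem_Icc_fractionalSupport_ssubset [Finite ι] {z d : ι → 𝕜}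
    (hz : z ∈ Icc 0 1) (hd : d ≠ 0) (hsupp : support d ⊆ fractionalSupport z) :
    ∃ t : 𝕜, 0 < t ∧ z + t • d ∈ Icc 0 1 ∧
      fractionalSupport (z + t • d) ⊂ fractionalSupport z := by
  choose! r hr_pos hr_mem hr_stop using fun v (hv : v ∈ support d) =>
    exists_step_to_boundary_of_mem_Ioo (hsupp hv) hv
  obtain ⟨v₀, hv₀, hmin⟩ :=
    (support d).exists_min_image r (toFinite _) (support_nonempty_iff.2 hd)
  have hoff : ∀ v ∉ support d, (z + r v₀ • d) v = z v := fun v hv => by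
    simp [notMem_support.1 hv]
  have hmem : ∀ v, (z + r v₀ • d) v ∈ Icc 0 1 := fun v => by
    by_cases hv : v ∈ support d
    · exact hr_mem v hv _ ⟨(hr_pos v₀ hv₀).le, hmin v hv⟩
    · exact hoff v hv ▸ ⟨hz.1 v, hz.2 v⟩
  have hsub : fractionalSupport (z + r v₀ • d) ⊆ fractionalSupport z := fun v hv => by
    by_cases hvd : v ∈ support d
    · exact hsupp hvd
    · exact (hoff v hvd).subst (motive := (· ∈ Ioo 0 1)) hv
  exact ⟨r v₀, hr_pos v₀ hv₀, ⟨fun v => (hmem v).1, fun v => (hmem v).2⟩,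
    hsub.ssubset_of_mem_notMem (hsupp hv₀) (hr_stop v₀ hv₀)⟩

end Cube

theorem exists_direction_of_not_isClique_fractionalSupport {V R : Type*} [CommRing R]
    [Nontrivial R] [Preorder R] {G : SimpleGraph V} {z : V → R}
    (hz : ¬ G.IsClique (fractionalSupport z)) (L : (V → R) →ₗ[R] R) :
    ∃ d : V → R, d ≠ 0 ∧ support d ⊆ fractionalSupport z ∧ G.IsIndepSet (support d) ∧
      L d = 0 := by
  obtain ⟨u, hu, v, hv, huv, hnadj⟩ :
      ∃ u ∈ fractionalSupport z, ∃ v ∈ fractionalSupport z, u ≠ v ∧ ¬ G.Adj u v := by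
    simpa [SimpleGraph.isClique_iff, Set.Pairwise] using hz
  obtain ⟨d, hd, hsupp, hLd⟩ := exists_ne_zero_support_subset_pair_map_eq_zero L huv
  have hindep : G.IsIndepSet {u, v} :=
    pairwise_pair.2 fun _ => ⟨hnadj, fun h => hnadj h.symm⟩
  exact ⟨d, hd, hsupp.trans (pair_subset hu hv), hindep.mono hsupp, hLd⟩

theorem mem_convexHull_image_isClique_fractionalSupport {V 𝕜 M : Type*} [Finite V] [Field 𝕜]
    [LinearOrder 𝕜] [IsStrictOrderedRing 𝕜] [AddCommGroup M] [Module 𝕜 M] {G : SimpleGraph V}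
    {F : (V → 𝕜) → M} {D : (V → 𝕜) → (V → 𝕜) →ₗ[𝕜] M}
    (hF : ∀ z d, G.IsIndepSet (support d) → F (z + d) = F z + D z d) (φ : M →ₗ[𝕜] 𝕜)
    {z : V → 𝕜} (hz : z ∈ Icc 0 1) :
    F z ∈ convexHull 𝕜
      (F '' {y ∈ Icc 0 1 | φ (F y) = φ (F z) ∧ G.IsClique (fractionalSupport y)}) := by
  induction hK : fractionalSupport z using WellFoundedLT.induction generalizing z with
  | _ K ih =>
  subst hK
  by_cases hclique : G.IsClique (fractionalSupport z)
  · exact subset_convexHull 𝕜 _ ⟨z, ⟨hz, rfl, hclique⟩, rfl⟩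
  obtain ⟨d, hd, hsupp, hindep, hφd⟩ :=
    exists_direction_of_not_isClique_fractionalSupport hclique (φ ∘ₗ D z)
  have hstep : ∀ d' : V → 𝕜, d' ≠ 0 → support d' = support d → φ (D z d') = 0 →
      ∃ t : 𝕜, 0 < t ∧ F z + t • D z d' ∈ convexHull 𝕜
        (F '' {y ∈ Icc 0 1 | φ (F y) = φ (F z) ∧ G.IsClique (fractionalSupport y)}) := by
    intro d' hd' hsupp' hφd'
    obtain ⟨t, ht, hmem, hlt⟩ :=
      exists_add_smul_mem_Icc_fractionalSupport_ssubset hz hd' (hsupp'.trans_subset hsupp)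
    have hFt : F (z + t • d') = F z + t • D z d' := by
      rw [hF z _ (hindep.mono ((support_const_smul_subset t d').trans hsupp'.subset)), map_smul]
    have hφt : φ (F (z + t • d')) = φ (F z) := by simp [hFt, hφd']
    have hconv := ih _ hlt hmem rfl
    rw [hφt, hFt] at hconv
    exact ⟨t, ht, hconv⟩
  obtain ⟨s, hs, hadd⟩ := hstep d hd rfl hφd
  obtain ⟨t, ht, hsub⟩ := hstep (-d) (neg_ne_zero.2 hd) (support_neg d) (by simpa using hφd)
  rw [map_neg, smul_neg, ← sub_eq_add_neg] at hsub
  exact mem_of_convex_of_add_smul_mem_of_sub_smul_mem (convex_convexHull 𝕜 _) hs ht hadd hsub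

section BipartiteGraph

variable {α β : Type*} (E : Finset (α × β))

/-- The bipartite graph `(α, β, E)` as a simple graph on the disjoint union `α ⊕ β`. -/
def bipartiteGraph : SimpleGraph (α ⊕ β) where
  Adj
    | .inl i, .inr j => (i, j) ∈ E
    | .inr j, .inl i => (i, j) ∈ E
    | _, _ => False
  symm := ⟨by rintro (_ | _) (_ | _) <;> exact id⟩
  loopless := ⟨by rintro (_ | _) <;> exact id⟩

/-- The sets `U` of variables that are left free by a fixing: an edge, or an isolated vertex. -/
def IsFreeSet (U : Set (α ⊕ β)) : Prop :=
  (∃ e ∈ E, U = {.inl e.1, .inr e.2}) ∨ (∃ i, (∀ j, (i, j) ∉ E) ∧ U = {.inl i}) ∨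
    ∃ j, (∀ i, (i, j) ∉ E) ∧ U = {.inr j}

variable {E}

theorem iUnion_isFreeSet {γ : Type*} (A : Set (α ⊕ β) → Set γ) :
    ⋃ (U) (_ : IsFreeSet E U), A U =
      (⋃ e : E, A {.inl e.1.1, .inr e.1.2}) ∪ (⋃ (i) (_ : ∀ j, (i, j) ∉ E), A {.inl i}) ∪
        ⋃ (j) (_ : ∀ i, (i, j) ∉ E), A {.inr j} := by
  ext
  simp [IsFreeSet, or_and_right, exists_or, or_assoc, ← exists_and_right]

theorem exists_isFreeSet_mem (v : α ⊕ β) : ∃ U, IsFreeSet E U ∧ v ∈ U := by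
  rcases v with i | j
  · by_cases hi : ∀ j, (i, j) ∉ E
    · exact ⟨{.inl i}, .inr (.inl ⟨i, hi, rfl⟩), rfl⟩
    · obtain ⟨j, hij⟩ := not_forall_not.1 hi
      exact ⟨{.inl i, .inr j}, .inl ⟨(i, j), hij, rfl⟩, .inl rfl⟩
  · by_cases hj : ∀ i, (i, j) ∉ E
    · exact ⟨{.inr j}, .inr (.inr ⟨j, hj, rfl⟩), rfl⟩
    · obtain ⟨i, hij⟩ := not_forall_not.1 hj
      exact ⟨{.inl i, .inr j}, .inl ⟨(i, j), hij, rfl⟩, .inr rfl⟩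

theorem subset_edge_of_isClique_bipartiteGraph {K : Set (α ⊕ β)}
    (hK : (bipartiteGraph E).IsClique K) {i : α} {j : β} (hi : .inl i ∈ K) (hj : .inr j ∈ K) :
    K ⊆ {.inl i, .inr j} := by
  rintro (i' | j') hv
  · exact .inl (by_contra fun hne => hK hv hi hne)
  · exact .inr (by_contra fun hne => hK hv hj hne)

theorem subsingleton_or_exists_edge_of_isClique_bipartiteGraph {K : Set (α ⊕ β)}
    (hK : (bipartiteGraph E).IsClique K) :
    K.Subsingleton ∨ ∃ e ∈ E, K ⊆ {.inl e.1, .inr e.2} := by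
  refine or_iff_not_imp_left.2 fun hnontrivial => ?_
  obtain ⟨u, hu, v, hv, huv⟩ := not_subsingleton_iff.1 hnontrivial
  have hadj := hK hu hv huv
  rcases u with i | j <;> rcases v with i' | j'
  · exact hadj.elim
  · exact ⟨(i, j'), hadj, subset_edge_of_isClique_bipartiteGraph hK hu hv⟩
  · exact ⟨(i', j), hadj, subset_edge_of_isClique_bipartiteGraph hK hv hu⟩
  · exact hadj.elim

theorem exists_isFreeSet_superset_of_isClique [Nonempty (α ⊕ β)] {K : Set (α ⊕ β)}
    (hK : (bipartiteGraph E).IsClique K) : ∃ U, IsFreeSet E U ∧ K ⊆ U := by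
  rcases subsingleton_or_exists_edge_of_isClique_bipartiteGraph hK with hsub | ⟨e, he, hKe⟩
  · obtain ⟨v, hv⟩ : ∃ v, K ⊆ {v} := by
      rcases hsub.eq_empty_or_singleton with rfl | ⟨v, rfl⟩
      · exact ⟨Classical.arbitrary _, empty_subset _⟩
      · exact ⟨v, Subset.rfl⟩
    obtain ⟨U, hU, hvU⟩ := exists_isFreeSet_mem (E := E) v
    exact ⟨U, hU, hv.trans (singleton_subset_iff.2 hvU)⟩
  · exact ⟨_, .inl ⟨e, he, rfl⟩, hKe⟩

end BipartiteGraph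

/-- The set `S_{U,σ}` of points of `S` whose coordinates outside `U` agree with `σ = (σx, σy)`. -/
def fixing {α β R M : Type*} (S : Set ((α → R) × (β → R) × M)) (U : Set (α ⊕ β)) (σx : α → R)
    (σy : β → R) : Set ((α → R) × (β → R) × M) :=
  {p ∈ S | (∀ i, .inl i ∉ U → p.1 i = σx i) ∧ ∀ j, .inr j ∉ U → p.2.1 j = σy j}

theorem mem_iUnion_fixing_of_mem_zero_one {α β R M : Type*} [Zero R] [One R]
    {S : Set ((α → R) × (β → R) × M)} {U : Set (α ⊕ β)} {p : (α → R) × (β → R) × M} (hp : p ∈ S)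
    (hx : ∀ i, .inl i ∉ U → p.1 i ∈ ({0, 1} : Set R))
    (hy : ∀ j, .inr j ∉ U → p.2.1 j ∈ ({0, 1} : Set R)) :
    p ∈ ⋃ (σx : α → R) (σy : β → R) (_ : ∀ i, σx i ∈ ({0, 1} : Set R))
      (_ : ∀ j, σy j ∈ ({0, 1} : Set R)), fixing S U σx σy := by
  obtain ⟨σx, hσx, hpx⟩ := exists_forall_mem_and_eqOn (insert_nonempty 0 {1}) hx
  obtain ⟨σy, hσy, hpy⟩ := exists_forall_mem_and_eqOn (insert_nonempty 0 {1}) hy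
  simp only [mem_iUnion]
  exact ⟨σx, σy, hσx, hσy, hp, hpx, hpy⟩

section BilinearLift

variable {α β R : Type*} [CommRing R]

/-- The lift of `z = (x, y)` to the point `(x, y, w)` with `w i j = x i * y j` for `(i, j) ∈ E`. -/
def bilinearLift (E : Finset (α × β)) (z : α ⊕ β → R) : (α → R) × (β → R) × (E → R) :=
  (z ∘ .inl, z ∘ .inr, fun e => z (.inl e.1.1) * z (.inr e.1.2))

/-- The derivative of `bilinearLift E` at `z`, the direction in which the lifted point moves when
`z` moves along `d`. -/
def bilinearLiftDeriv (E : Finset (α × β)) (z : α ⊕ β → R) :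
    (α ⊕ β → R) →ₗ[R] (α → R) × (β → R) × (E → R) where
  toFun d := (d ∘ .inl, d ∘ .inr,
    fun e => z (.inl e.1.1) * d (.inr e.1.2) + d (.inl e.1.1) * z (.inr e.1.2))
  map_add' d d' := by
    refine Prod.ext rfl (Prod.ext rfl (funext fun e => ?_))
    simp only [Prod.snd_add, Pi.add_apply]
    ring
  map_smul' t d := by
    refine Prod.ext rfl (Prod.ext rfl (funext fun e => ?_))
    simp only [Prod.smul_snd, Pi.smul_apply, smul_eq_mul, RingHom.id_apply]
    ring

theorem bilinearLift_add_of_isIndepSet {E : Finset (α × β)} (z d : α ⊕ β → R)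
    (hd : (bipartiteGraph E).IsIndepSet (support d)) :
    bilinearLift E (z + d) = bilinearLift E z + bilinearLiftDeriv E z d := by
  have hprod : ∀ e : E, d (.inl e.1.1) * d (.inr e.1.2) = 0 := fun e =>
    by_contra fun hne =>
      hd (left_ne_zero_of_mul hne) (right_ne_zero_of_mul hne) Sum.inl_ne_inr e.2
  refine Prod.ext rfl (Prod.ext rfl (funext fun e => ?_))
  simp only [bilinearLift, bilinearLiftDeriv, LinearMap.coe_mk, AddHom.coe_mk, Prod.snd_add,
    Pi.add_apply]
  linear_combination hprod e

end BilinearLift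

section SingleRow

variable {α β R : Type*} [Fintype α] [Fintype β] [CommRing R]
  (E : Finset (α × β)) (q : E → R) (a : α → R) (b : β → R) (c : R)

/-- The linear part `∑ q w + ∑ a x + ∑ b y` of the row defining `S`. -/
def rowForm : (α → R) × (β → R) × (E → R) →ₗ[R] R where
  toFun p := (∑ e, q e * p.2.2 e) + (∑ i, a i * p.1 i) + ∑ j, b j * p.2.1 j
  map_add' p p' := by
    simp only [Prod.fst_add, Prod.snd_add, Pi.add_apply, mul_add, Finset.sum_add_distrib]
    ring
  map_smul' t p := by
    simp only [Prod.smul_fst, Prod.smul_snd, Pi.smul_apply, smul_eq_mul, mul_left_comm _ t,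
      ← Finset.mul_sum, RingHom.id_apply, mul_add]

/-- The feasible set `S` of a bipartite bilinear program (BBP) with a single row: points `(x, y, w)`
of the unit cube with `w i j = x i * y j` on `E` that satisfy the row. -/
def singleRowBBP [Preorder R] : Set ((α → R) × (β → R) × (E → R)) :=
  {p | (∀ i, p.1 i ∈ Icc 0 1) ∧ (∀ j, p.2.1 j ∈ Icc 0 1) ∧ (∀ e, p.2.2 e ∈ Icc 0 1) ∧
    (∑ e, q e * p.2.2 e) + (∑ i, a i * p.1 i) + (∑ j, b j * p.2.1 j) + c = 0 ∧
    ∀ e : E, p.2.2 e = p.1 e.1.1 * p.2.1 e.1.2}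

variable {E q a b c}

theorem exists_bilinearLift_eq_of_mem_singleRowBBP [Preorder R]
    {p : (α → R) × (β → R) × (E → R)} (hp : p ∈ singleRowBBP E q a b c) :
    ∃ z ∈ Icc 0 1, bilinearLift E z = p := by
  obtain ⟨hx, hy, -, -, hw⟩ := hp
  refine ⟨Sum.elim p.1 p.2.1, ⟨?_, ?_⟩, Prod.ext rfl (Prod.ext rfl (funext fun e => (hw e).symm))⟩
  · exact Sum.rec (fun i => (hx i).1) fun j => (hy j).1
  · exact Sum.rec (fun i => (hx i).2) fun j => (hy j).2

theorem bilinearLift_mem_singleRowBBP_iff [PartialOrder R] [IsOrderedRing R] {z : α ⊕ β → R}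
    (hz : z ∈ Icc 0 1) :
    bilinearLift E z ∈ singleRowBBP E q a b c ↔ rowForm E q a b (bilinearLift E z) = -c := by
  refine ⟨fun h => eq_neg_of_add_eq_zero_left h.2.2.2.1, fun h => ?_⟩
  exact ⟨fun i => ⟨hz.1 _, hz.2 _⟩, fun j => ⟨hz.1 _, hz.2 _⟩,
    fun e => ⟨mul_nonneg (hz.1 _) (hz.1 _), mul_le_one₀ (hz.2 _) (hz.1 _) (hz.2 _)⟩,
    eq_neg_iff_add_eq_zero.1 h, fun e => rfl⟩

end SingleRow

section ConvexHull

variable {α β 𝕜 : Type*} [Fintype α] [Fintype β] [Field 𝕜] [LinearOrder 𝕜] [IsStrictOrderedRing 𝕜]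
  (E : Finset (α × β)) (q : E → 𝕜) (a : α → 𝕜) (b : β → 𝕜) (c : 𝕜)

theorem singleRowBBP_subset_convexHull_isClique :
    singleRowBBP E q a b c ⊆ convexHull 𝕜 (bilinearLift E '' {z ∈ Icc 0 1 |
      bilinearLift E z ∈ singleRowBBP E q a b c ∧
        (bipartiteGraph E).IsClique (fractionalSupport z)}) := by
  intro p hp
  obtain ⟨z, hz, rfl⟩ := exists_bilinearLift_eq_of_mem_singleRowBBP hp
  have hrow := (bilinearLift_mem_singleRowBBP_iff hz).1 hp
  refine convexHull_mono (image_mono ?_) (mem_convexHull_image_isClique_fractionalSupport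
    bilinearLift_add_of_isIndepSet (rowForm E q a b) hz)
  rintro y ⟨hy, hyz, hclique⟩
  exact ⟨hy, (bilinearLift_mem_singleRowBBP_iff hy).2 (hyz.trans hrow), hclique⟩

theorem convexHull_single_row_BBP_eq_union_of_fixings_general [Nonempty (α ⊕ β)] :
    convexHull 𝕜 (singleRowBBP E q a b c) =
      convexHull 𝕜 (⋃ (U : Set (α ⊕ β)) (_ : IsFreeSet E U) (σx : α → 𝕜) (σy : β → 𝕜)
        (_ : ∀ i, σx i ∈ ({0, 1} : Set 𝕜)) (_ : ∀ j, σy j ∈ ({0, 1} : Set 𝕜)),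
        fixing (singleRowBBP E q a b c) U σx σy) := by
  apply subset_antisymm
  · refine convexHull_min ((singleRowBBP_subset_convexHull_isClique E q a b c).trans
      (convexHull_mono ?_)) (convex_convexHull 𝕜 _)
    rintro _ ⟨z, ⟨hz, hzS, hclique⟩, rfl⟩
    obtain ⟨U, hU, hzU⟩ := exists_isFreeSet_superset_of_isClique hclique
    have hfixed : ∀ v ∉ U, z v ∈ ({0, 1} : Set 𝕜) := fun v hv =>
      apply_mem_zero_one_of_notMem_fractionalSupport hz fun h => hv (hzU h)
    exact mem_biUnion hU (mem_iUnion_fixing_of_mem_zero_one hzS (fun i => hfixed (.inl i))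
      fun j => hfixed (.inr j))
  · refine convexHull_mono ?_
    simp only [iUnion_subset_iff]
    exact fun _ _ _ _ _ _ => sep_subset _ _

end ConvexHull

/-- The convex hull of the single-row BBP set `S` equals the convex hull of
the union, over all sets `U` of the three admissible forms (an edge `{i₀,j₀}` of `E`, an
isolated node of `V₁`, or an isolated node of `V₂`) and all `0/1` assignments `σ` of the
variables outside `U`, of the restricted sets `S_{U,σ}`. -/
theorem convexHull_single_row_BBP_eq_union_of_fixings (n₁ n₂ : ℕ) (hn₁ : 0 < n₁) (hn₂ : 0 < n₂)
    (E : Finset (Fin n₁ × Fin n₂)) (q : Fin n₁ × Fin n₂ → ℝ)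
    (a : Fin n₁ → ℝ) (b : Fin n₂ → ℝ) (c : ℝ)
    (S : Set ((Fin n₁ → ℝ) × (Fin n₂ → ℝ) × (↥E → ℝ)))
    (hS : S = {p | (∀ i, p.1 i ∈ Set.Icc (0:ℝ) 1) ∧ (∀ j, p.2.1 j ∈ Set.Icc (0:ℝ) 1) ∧
        (∀ e : ↥E, p.2.2 e ∈ Set.Icc (0:ℝ) 1) ∧
        (∑ e : ↥E, q e.1 * p.2.2 e) + (∑ i, a i * p.1 i) + (∑ j, b j * p.2.1 j) + c = 0 ∧
        ∀ e : ↥E, p.2.2 e = p.1 (e : Fin n₁ × Fin n₂).1 * p.2.1 (e : Fin n₁ × Fin n₂).2}) :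
    convexHull ℝ S =
      convexHull ℝ
        ((⋃ (e : ↥E) (σx : Fin n₁ → ℝ) (σy : Fin n₂ → ℝ)
            (_ : ∀ i, σx i ∈ ({0, 1} : Set ℝ)) (_ : ∀ j, σy j ∈ ({0, 1} : Set ℝ)),
            {p ∈ S | (∀ i, i ≠ (e : Fin n₁ × Fin n₂).1 → p.1 i = σx i) ∧
              (∀ j, j ≠ (e : Fin n₁ × Fin n₂).2 → p.2.1 j = σy j)}) ∪
         (⋃ (i₀ : Fin n₁) (_ : ∀ j, (i₀, j) ∉ E) (σx : Fin n₁ → ℝ) (σy : Fin n₂ → ℝ)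
            (_ : ∀ i, σx i ∈ ({0, 1} : Set ℝ)) (_ : ∀ j, σy j ∈ ({0, 1} : Set ℝ)),
            {p ∈ S | (∀ i, i ≠ i₀ → p.1 i = σx i) ∧ (∀ j, p.2.1 j = σy j)}) ∪
         (⋃ (j₀ : Fin n₂) (_ : ∀ i, (i, j₀) ∉ E) (σx : Fin n₁ → ℝ) (σy : Fin n₂ → ℝ)
            (_ : ∀ i, σx i ∈ ({0, 1} : Set ℝ)) (_ : ∀ j, σy j ∈ ({0, 1} : Set ℝ)),
            {p ∈ S | (∀ i, p.1 i = σx i) ∧ (∀ j, j ≠ j₀ → p.2.1 j = σy j)})) := by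
  have : Nonempty (Fin n₁) := Fin.pos_iff_nonempty.1 hn₁
  simpa [hS, iUnion_isFreeSet, fixing, singleRowBBP] using
    convexHull_single_row_BBP_eq_union_of_fixings_general E (fun e => q e) a b c
end

section
/- Let f : [0,1]^n → ℝ be a continuous function and let B ⊆ [0,1]^n be a convex set. Then conv({x ∈ B : f(x) = 0}) = conv({x ∈ B : f(x) ≤ 0}) ∩ conv({x ∈ B : f(x) ≥ 0}). -/
/-!
If `x` were outside the convex hull of the zero set, Stone's separation theorem would give a convex
set `H` with convex complement that contains `x` and misses every zero. As `x` is a convex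
combination of points where `f ≤ 0`, and also of points where `0 ≤ f`, and the complement of `H` is
convex, `H` contains a point of each kind. By the intermediate value theorem `f` vanishes somewhere
on the segment between them, which lies in `H`: a contradiction.
-/

theorem inter_nonempty_of_mem_convexHull_of_convex_compl {𝕜 E : Type*} [Semiring 𝕜] [PartialOrder 𝕜]
    [AddCommMonoid E] [Module 𝕜 E] {s H : Set E} {x : E} (hH : Convex 𝕜 Hᶜ)
    (hxs : x ∈ convexHull 𝕜 s) (hxH : x ∈ H) : (s ∩ H).Nonempty := by
  by_contra h
  have hs : s ⊆ Hᶜ := fun p hp hpH => h ⟨p, hp, hpH⟩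
  exact convexHull_min hs hH hxs hxH

theorem convexHull_inter_convexHull_subset_of_segment_inter_nonempty {𝕜 E : Type*}
    [Field 𝕜] [LinearOrder 𝕜] [IsStrictOrderedRing 𝕜] [AddCommGroup E] [Module 𝕜 E] {s t Z : Set E}
    (hZ : ∀ p ∈ s, ∀ q ∈ t, (segment 𝕜 p q ∩ Z).Nonempty) :
    convexHull 𝕜 s ∩ convexHull 𝕜 t ⊆ convexHull 𝕜 Z := by
  rintro x ⟨hxs, hxt⟩
  by_contra hxZ
  obtain ⟨H, hH, hHc, hxH, hZH⟩ := exists_convex_convex_compl_subset (convex_singleton x)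
    (convex_convexHull 𝕜 Z) (Set.disjoint_singleton_left.mpr hxZ)
  rw [Set.singleton_subset_iff] at hxH
  obtain ⟨p, hps, hpH⟩ := inter_nonempty_of_mem_convexHull_of_convex_compl hHc hxs hxH
  obtain ⟨q, hqt, hqH⟩ := inter_nonempty_of_mem_convexHull_of_convex_compl hHc hxt hxH
  obtain ⟨z, hz, hzZ⟩ := hZ p hps q hqt
  exact hZH (subset_convexHull 𝕜 Z hzZ) (hH.segment_subset hpH hqH hz)

section LevelSet

variable {E α : Type*} [AddCommGroup E] [Module ℝ E] [TopologicalSpace E] [ContinuousAdd E]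
  [ContinuousSMul ℝ E] [LinearOrder α] [TopologicalSpace α] [OrderClosedTopology α]
  {f : E → α} {B : Set E}

theorem segment_inter_level_nonempty (hf : ContinuousOn f B) (hB : Convex ℝ B) {c : α} {p q : E}
    (hp : p ∈ B) (hq : q ∈ B) (hfp : f p ≤ c) (hfq : c ≤ f q) :
    (segment ℝ p q ∩ {x ∈ B | f x = c}).Nonempty := by
  have hsub : segment ℝ p q ⊆ B := hB.segment_subset hp hq
  obtain ⟨z, hz, hfz⟩ := (convex_segment p q).isPreconnected.intermediate_value
    (left_mem_segment ℝ p q) (right_mem_segment ℝ p q) (hf.mono hsub) ⟨hfp, hfq⟩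
  exact ⟨z, hz, hsub hz, hfz⟩

theorem convexHull_eq_level_inter_general (hf : ContinuousOn f B) (hB : Convex ℝ B) (c : α) :
    convexHull ℝ {x ∈ B | f x = c} =
      convexHull ℝ {x ∈ B | f x ≤ c} ∩ convexHull ℝ {x ∈ B | c ≤ f x} := by
  apply Set.Subset.antisymm
  · exact Set.subset_inter (convexHull_mono fun x hx => ⟨hx.1, hx.2.le⟩)
      (convexHull_mono fun x hx => ⟨hx.1, hx.2.ge⟩)
  · exact convexHull_inter_convexHull_subset_of_segment_inter_nonempty
      fun p hp q hq => segment_inter_level_nonempty hf hB hp.1 hq.1 hp.2 hq.2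

end LevelSet

/-- Let `f : [0,1]^n → ℝ` be continuous and `B ⊆ [0,1]^n` convex. Then
`conv {x ∈ B : f x = 0} = conv {x ∈ B : f x ≤ 0} ∩ conv {x ∈ B : f x ≥ 0}`. -/
theorem convexHull_eq_level_inter (n : ℕ) (f : (Fin n → ℝ) → ℝ)
    (hf : ContinuousOn f (Set.Icc 0 1))
    (B : Set (Fin n → ℝ)) (hB : B ⊆ Set.Icc 0 1) (hBconv : Convex ℝ B) :
    convexHull ℝ {x ∈ B | f x = 0} =
      convexHull ℝ {x ∈ B | f x ≤ 0} ∩ convexHull ℝ {x ∈ B | 0 ≤ f x} :=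
  convexHull_eq_level_inter_general (hf.mono hB) hBconv 0
end

section
/- Let f : [0,1]^n → ℝ be a convex function. Then the set G := conv({x ∈ [0,1]^n : f(x) ≥ 0}) is a polytope; that is, there exists a finite set F ⊆ ℝ^n such that G = conv(F). -/
/-!
Let `P` be the convex hull of a finite set `S`, and let `f` be convex on `P`. On a segment between
two points of `S`, the superlevel set of `f` spans a segment whose endpoints can be chosen in the
superlevel set; let `F` be the finite set of all these endpoints. If some `x ∈ P` with `r ≤ f x`
were not in the hull of `F`, a hyperplane would separate it from that hull. The part of `P` on the
side of `x` is spanned by the parts of the segments between points of `S` on that side, and `f < r`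
on those, so `f x < r` by convexity of the strict sublevel set.

The separation takes place in the standard simplex, of which `P` is a linear image.
-/

open Set Pointwise

section HalfSpace

variable {𝕜 E : Type*} [Field 𝕜] [LinearOrder 𝕜] [IsStrictOrderedRing 𝕜] [AddCommGroup E]
  [Module 𝕜 E] {C S : Set E} {a b x : E}

-- When `h z ≠ h o`, the line through `o` and `z` meets `{h = 0}` at
-- `(h z - h o)⁻¹ • (h z • o - h o • z)`; without the denominator the condition is affine in `z`.
lemma convex_setOf_left_crossing_mem_smul (h : E →ᵃ[𝕜] 𝕜) (hC : Convex 𝕜 C) (o : E) :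
    Convex 𝕜 {z | 0 ≤ h z - h o ∧ h z • o - h o • z ∈ (h z - h o) • C} := by
  rintro y ⟨hy, hyC⟩ z ⟨hz, hzC⟩ α β hα hβ hαβ
  have hdiff : h (α • y + β • z) - h o = α * (h y - h o) + β * (h z - h o) := by
    rw [Convex.combo_affine_apply hαβ, smul_eq_mul, smul_eq_mul]
    linear_combination h o * hαβ
  have hcross : h (α • y + β • z) • o - h o • (α • y + β • z) =
      α • (h y • o - h o • y) + β • (h z • o - h o • z) := by
    rw [Convex.combo_affine_apply hαβ, smul_eq_mul, smul_eq_mul]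
    module
  have hαy := mul_nonneg hα hy
  have hβz := mul_nonneg hβ hz
  refine ⟨hdiff ▸ add_nonneg hαy hβz, ?_⟩
  rw [hdiff, hcross, hC.add_smul hαy hβz, mul_smul, mul_smul]
  exact add_mem_add (smul_mem_smul_set hyC) (smul_mem_smul_set hzC)

lemma convex_setOf_right_crossing_mem_smul (h : E →ᵃ[𝕜] 𝕜) (hC : Convex 𝕜 C) (o : E) :
    Convex 𝕜 {z | 0 ≤ h o - h z ∧ h o • z - h z • o ∈ (h o - h z) • C} := by
  simpa [neg_add_eq_sub] using convex_setOf_left_crossing_mem_smul (-h) hC o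

lemma crossing_mem_smul_of_mem_convexHull {h : E →ᵃ[𝕜] 𝕜} {N M : Set E} (hC : Convex 𝕜 C)
    (hNM : ∀ p ∈ N, ∀ q ∈ M, 0 ≤ h p - h q ∧ h p • q - h q • p ∈ (h p - h q) • C)
    (ha : a ∈ convexHull 𝕜 N) (hb : b ∈ convexHull 𝕜 M) :
    h a • b - h b • a ∈ (h a - h b) • C := by
  have hNb : ∀ p ∈ N, 0 ≤ h p - h b ∧ h p • b - h b • p ∈ (h p - h b) • C := fun p hp ↦
    convexHull_min (hNM p hp) (convex_setOf_right_crossing_mem_smul h hC p) hb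
  exact (convexHull_min hNb (convex_setOf_left_crossing_mem_smul h hC b) ha).2

lemma crossing_mem_smul_of_segment_inter_subset {h : E →ᵃ[𝕜] 𝕜} (ha : 0 ≤ h a) (hb : h b < 0)
    (hab : segment 𝕜 a b ∩ {y | 0 ≤ h y} ⊆ C) : h a • b - h b • a ∈ (h a - h b) • C := by
  have hpos : 0 < h a - h b := by linarith
  have hsum : -h b / (h a - h b) + h a / (h a - h b) = 1 := by field_simp; ring
  refine ⟨(-h b / (h a - h b)) • a + (h a / (h a - h b)) • b, hab ⟨?_, ?_⟩, ?_⟩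
  · exact ⟨_, _, div_nonneg (by linarith) hpos.le, div_nonneg ha hpos.le, hsum, rfl⟩
  · rw [mem_ofPred_eq, Convex.combo_affine_apply hsum, smul_eq_mul, smul_eq_mul]
    apply le_of_eq
    ring
  · match_scalars <;> field_simp

lemma mem_of_mem_segment_of_crossing_mem_smul {h : E →ᵃ[𝕜] 𝕜} (hC : Convex 𝕜 C) (haC : a ∈ C)
    (ha : 0 ≤ h a) (hb : h b < 0) (hcross : h a • b - h b • a ∈ (h a - h b) • C)
    (hx : x ∈ segment 𝕜 a b) (hhx : 0 ≤ h x) : x ∈ C := by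
  obtain ⟨α, β, -, hβ, hαβ, rfl⟩ := hx
  obtain ⟨y, hy, hycross⟩ := hcross
  rw [Convex.combo_affine_apply hαβ, smul_eq_mul, smul_eq_mul] at hhx
  rcases ha.eq_or_lt with ha0 | hapos
  · have hβ0 : β = 0 := by
      rw [← ha0, mul_zero, zero_add] at hhx
      exact hβ.antisymm' (nonpos_of_mul_nonneg_left hhx hb)
    obtain rfl : α = 1 := by simpa [hβ0] using hαβ
    simpa [hβ0] using haC
  · have hx_eq : α • a + β • b =
        ((α * h a + β * h b) / h a) • a + (β / h a) • ((h a - h b) • y) := by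
      beta_reduce at hycross
      rw [hycross]
      match_scalars <;> field_simp
      ring
    rw [hx_eq, smul_smul]
    refine hC haC hy (div_nonneg hhx ha) ?_ ?_
    · exact mul_nonneg (div_nonneg hβ ha) (by linarith)
    · field_simp
      linear_combination h a * hαβ

theorem convexHull_inter_halfSpace_subset (h : E →ᵃ[𝕜] 𝕜) (hC : Convex 𝕜 C)
    (hS : ∀ p ∈ S, ∀ q ∈ S, segment 𝕜 p q ∩ {y | 0 ≤ h y} ⊆ C) :
    convexHull 𝕜 S ∩ {y | 0 ≤ h y} ⊆ C := by
  rintro x ⟨hxS, hx⟩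
  set N := {s ∈ S | 0 ≤ h s}
  set M := {s ∈ S | h s < 0}
  have hunion : N ∪ M = S := by
    ext s
    simp only [N, M, mem_union, mem_ofPred_eq, ← and_or_left, le_or_gt, and_true]
  have hNC : convexHull 𝕜 N ⊆ C :=
    convexHull_min (fun p hp ↦ hS p hp.1 p hp.1 ⟨left_mem_segment 𝕜 p p, hp.2⟩) hC
  have hN : convexHull 𝕜 N ⊆ {y | 0 ≤ h y} :=
    convexHull_min (fun _ hp ↦ hp.2) ((convex_Ici 0).affine_preimage h)
  have hM : convexHull 𝕜 M ⊆ {y | h y < 0} :=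
    convexHull_min (fun _ hq ↦ hq.2) ((convex_Iio 0).affine_preimage h)
  rcases N.eq_empty_or_nonempty with hN0 | hNne
  · rw [← hunion, hN0, empty_union] at hxS
    exact absurd hx (not_le.2 (hM hxS))
  rcases M.eq_empty_or_nonempty with hM0 | hMne
  · rw [← hunion, hM0, union_empty] at hxS
    exact hNC hxS
  rw [← hunion, convexHull_union hNne hMne, mem_convexJoin] at hxS
  obtain ⟨a, ha, b, hb, hxab⟩ := hxS
  have hcross : h a • b - h b • a ∈ (h a - h b) • C :=
    crossing_mem_smul_of_mem_convexHull hC (fun p hp q hq ↦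
      ⟨sub_nonneg.2 (hq.2.le.trans hp.2),
        crossing_mem_smul_of_segment_inter_subset hp.2 hq.2 (hS p hp.1 q hq.1)⟩) ha hb
  exact mem_of_mem_segment_of_crossing_mem_smul hC (hNC ha) (hN ha) (hM hb) hcross hxab hx

end HalfSpace

lemma exists_isGreatest_superlevel_of_convexOn_Icc {a b r : ℝ} {g : ℝ → ℝ}
    (hg : ConvexOn ℝ (Icc a b) g) (hne : {t ∈ Icc a b | r ≤ g t}.Nonempty) :
    ∃ m, IsGreatest {t ∈ Icc a b | r ≤ g t} m := by
  set T := {t ∈ Icc a b | r ≤ g t}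
  have hT : IsLUB T (sSup T) := isLUB_csSup hne ⟨b, fun t ht ↦ ht.1.2⟩
  set m := sSup T
  refine ⟨m, ?_, hT.1⟩
  obtain ⟨t₀, ht₀⟩ := hne
  have hm : m ∈ Icc a b := ⟨ht₀.1.1.trans (hT.1 ht₀), hT.2 fun t ht ↦ ht.1.2⟩
  refine ⟨hm, not_lt.1 fun hgm ↦ ?_⟩
  have hlt : t₀ < m := (hT.1 ht₀).lt_of_ne (by rintro rfl; exact hgm.not_ge ht₀.2)
  -- The chord of `g` over `[t₀, m]` takes the value `r` at some `c < m`, so `g < r` on `(c, m]`.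
  obtain ⟨c, hcm, hc, hgc⟩ : ∃ c < m, c ∈ Icc a b ∧ g c ≤ r := by
    have hd : 0 < g t₀ - g m := by linarith [ht₀.2]
    have hα : 0 < (r - g m) / (g t₀ - g m) := div_pos (by linarith) hd
    have hβ : 0 ≤ (g t₀ - r) / (g t₀ - g m) := div_nonneg (by linarith [ht₀.2]) hd.le
    have hαβ : (r - g m) / (g t₀ - g m) + (g t₀ - r) / (g t₀ - g m) = 1 := by field_simp; ring
    refine ⟨_, ?_, hg.1 ht₀.1 hm hα.le hβ hαβ, (hg.2 ht₀.1 hm hα.le hβ hαβ).trans_eq ?_⟩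
    · simp only [smul_eq_mul]
      linear_combination mul_lt_mul_of_pos_left hlt hα + m * hαβ
    · simp only [smul_eq_mul]
      field_simp
      ring
  refine hcm.not_ge (hT.2 fun t ht ↦ not_lt.1 fun hct ↦ ?_)
  have htm : t < m := (hT.1 ht).lt_of_ne (by rintro rfl; exact hgm.not_ge ht.2)
  have ht_open : t ∈ openSegment ℝ c m := by
    rw [openSegment_eq_Ioo hcm]
    exact ⟨hct, htm⟩
  have := hg.lt_left_of_right_lt hc hm ht_open (hgm.trans_le ht.2)
  linarith [ht.2]

section Polytope

variable {E : Type*} [AddCommGroup E] [Module ℝ E] {S : Set E} {f : E → ℝ} {r : ℝ}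

lemma exists_superlevel_subset_segment {p q : E} (hf : ConvexOn ℝ (segment ℝ p q) f)
    (hp : r ≤ f p) :
    ∃ e ∈ segment ℝ p q, r ≤ f e ∧ {x ∈ segment ℝ p q | r ≤ f x} ⊆ segment ℝ p e := by
  set γ : ℝ →ᵃ[ℝ] E := AffineMap.lineMap p q
  have hγ : ∀ t ∈ Icc (0 : ℝ) 1, γ t ∈ segment ℝ p q := fun t ht ↦ lineMap_mem_segment ℝ p q ht
  have hfγ : ConvexOn ℝ (Icc 0 1) (f ∘ γ) := (hf.comp_affineMap γ).subset hγ (convex_Icc 0 1)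
  obtain ⟨m, ⟨hm, hfm⟩, hmax⟩ := exists_isGreatest_superlevel_of_convexOn_Icc (r := r) hfγ
    ⟨0, left_mem_Icc.2 zero_le_one, by simpa [γ] using hp⟩
  refine ⟨γ m, hγ m hm, hfm, ?_⟩
  rintro x ⟨hx, hfx⟩
  rw [segment_eq_image_lineMap] at hx
  obtain ⟨t, ht, rfl⟩ := hx
  have himage : γ '' segment ℝ 0 m = segment ℝ p (γ m) := by
    rw [image_segment, AffineMap.lineMap_apply_zero]
  rw [← himage, segment_eq_Icc hm.1]
  exact mem_image_of_mem γ ⟨ht.1, hmax ⟨ht, hfx⟩⟩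

lemma exists_finite_superlevel_segment_subset_convexHull (hS : S.Finite)
    (hf : ConvexOn ℝ (convexHull ℝ S) f) (r : ℝ) :
    ∃ F ⊆ {x ∈ convexHull ℝ S | r ≤ f x}, F.Finite ∧
      ∀ p ∈ S, ∀ q ∈ S, {x ∈ segment ℝ p q | r ≤ f x} ⊆ convexHull ℝ F := by
  set P := {p ∈ S | r ≤ f p}
  have hseg {p q : E} (hp : p ∈ S) (hq : q ∈ S) : segment ℝ p q ⊆ convexHull ℝ S :=
    segment_subset_convexHull hp hq
  have hend : ∀ p ∈ P, ∀ q ∈ S, ∃ e ∈ segment ℝ p q, r ≤ f e ∧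
      {x ∈ segment ℝ p q | r ≤ f x} ⊆ segment ℝ p e := fun p hp q hq ↦
    exists_superlevel_subset_segment (hf.subset (hseg hp.1 hq) (convex_segment p q)) hp.2
  choose! e he_mem hre he using hend
  have hP_seg : ∀ p ∈ P, ∀ q ∈ S,
      {x ∈ segment ℝ p q | r ≤ f x} ⊆ convexHull ℝ (P ∪ image2 e P S) := fun p hp q hq ↦
    (he p hp q hq).trans (segment_subset_convexHull (.inl hp) (.inr (mem_image2_of_mem hp hq)))
  have hP : P.Finite := hS.subset (sep_subset S _)
  refine ⟨P ∪ image2 e P S, union_subset ?_ ?_, hP.union (hP.image2 e hS), ?_⟩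
  · exact fun p hp ↦ ⟨subset_convexHull ℝ S hp.1, hp.2⟩
  · rintro _ ⟨p, hp, q, hq, rfl⟩
    exact ⟨hseg hp.1 hq (he_mem p hp q hq), hre p hp q hq⟩
  · rintro p hp q hq x ⟨hx, hrx⟩
    have hmax : f x ≤ max (f p) (f q) :=
      hf.le_max_of_mem_segment (subset_convexHull ℝ S hp) (subset_convexHull ℝ S hq) hx
    rcases le_max_iff.1 (hrx.trans hmax) with hrp | hrq
    · exact hP_seg p ⟨hp, hrp⟩ q hq ⟨hx, hrx⟩
    · exact hP_seg q ⟨hq, hrq⟩ p hp ⟨segment_symm ℝ p q ▸ hx, hrx⟩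

theorem superlevel_subset_of_superlevel_segment_subset [TopologicalSpace E]
    [IsTopologicalAddGroup E] [ContinuousSMul ℝ E] [LocallyConvexSpace ℝ E] {K : Set E}
    (hf : ConvexOn ℝ (convexHull ℝ S) f) (hK : Convex ℝ K) (hK_closed : IsClosed K)
    (hSK : ∀ p ∈ S, ∀ q ∈ S, {x ∈ segment ℝ p q | r ≤ f x} ⊆ K) :
    {x ∈ convexHull ℝ S | r ≤ f x} ⊆ K := by
  rintro x ⟨hx, hrx⟩
  by_contra hxK
  obtain ⟨ℓ, u, hℓK, hℓx⟩ := geometric_hahn_banach_closed_point hK hK_closed hxK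
  set h : E →ᵃ[ℝ] ℝ := ℓ.toLinearMap.toAffineMap - AffineMap.const ℝ E u
  have hsegment : ∀ p ∈ S, ∀ q ∈ S,
      segment ℝ p q ∩ {y | 0 ≤ h y} ⊆ {y ∈ convexHull ℝ S | f y < r} := by
    rintro p hp q hq y ⟨hy, hhy⟩
    refine ⟨segment_subset_convexHull hp hq hy, not_le.1 fun hry ↦ ?_⟩
    exact (hℓK y (hSK p hp q hq ⟨hy, hry⟩)).not_ge (sub_nonneg.1 hhy)
  have hfx := convexHull_inter_halfSpace_subset h (hf.convex_lt r) hsegment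
    ⟨hx, sub_nonneg.2 hℓx.le⟩
  exact hfx.2.not_ge hrx

theorem exists_finset_convexHull_superlevel_of_locallyConvexSpace [TopologicalSpace E] [T2Space E]
    [IsTopologicalAddGroup E] [ContinuousSMul ℝ E] [LocallyConvexSpace ℝ E] (hS : S.Finite)
    (hf : ConvexOn ℝ (convexHull ℝ S) f) (r : ℝ) :
    ∃ F : Finset E, convexHull ℝ {x ∈ convexHull ℝ S | r ≤ f x} = convexHull ℝ (F : Set E) := by
  obtain ⟨F, hF_sub, hF, hSF⟩ := exists_finite_superlevel_segment_subset_convexHull hS hf r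
  refine ⟨hF.toFinset, ?_⟩
  rw [hF.coe_toFinset]
  refine subset_antisymm (convexHull_min ?_ (convex_convexHull ℝ F)) (convexHull_mono hF_sub)
  exact superlevel_subset_of_superlevel_segment_subset hf (convex_convexHull ℝ F)
    (hF.isClosed_convexHull ℝ) hSF

theorem convexHull_superlevel_of_convex_is_polytope_general (hS : S.Finite)
    (hf : ConvexOn ℝ (convexHull ℝ S) f) (r : ℝ) :
    ∃ F : Finset E, convexHull ℝ {x ∈ convexHull ℝ S | r ≤ f x} = convexHull ℝ (F : Set E) := by
  classical
  let := hS.fintype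
  obtain ⟨V, hV, L, hLV⟩ : ∃ V : Set (S → ℝ), V.Finite ∧ ∃ L : (S → ℝ) →ₗ[ℝ] E,
      L '' convexHull ℝ V = convexHull ℝ S := by
    refine ⟨_, finite_range fun i j : S ↦ if i = j then (1 : ℝ) else 0,
      ∑ x : S, (LinearMap.proj (R := ℝ) x).smulRight x.1, ?_⟩
    rw [convexHull_basis_eq_stdSimplex]
    exact hS.convexHull_eq_image.symm
  have hfL : ConvexOn ℝ (convexHull ℝ V) (f ∘ L) :=
    (hf.comp_linearMap L).subset (image_subset_iff.1 hLV.subset) (convex_convexHull ℝ V)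
  obtain ⟨F, hF⟩ := exists_finset_convexHull_superlevel_of_locallyConvexSpace hV hfL r
  refine ⟨F.image L, ?_⟩
  have himage : {x ∈ convexHull ℝ S | r ≤ f x} = L '' {w ∈ convexHull ℝ V | r ≤ (f ∘ L) w} := by
    rw [← hLV]
    exact (image_inter_preimage L _ {x | r ≤ f x}).symm
  rw [himage, ← L.image_convexHull, hF, L.image_convexHull, Finset.coe_image]

end Polytope

lemma convexHull_pi_pair_eq_Icc {𝕜 ι : Type*} [Finite ι] [Field 𝕜] [LinearOrder 𝕜]
    [IsStrictOrderedRing 𝕜] {a b : ι → 𝕜} (hab : a ≤ b) :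
    convexHull 𝕜 (univ.pi fun i ↦ {a i, b i}) = Icc a b := by
  simp_rw [convexHull_pi, convexHull_pair, segment_eq_Icc (hab _), pi_univ_Icc]

/-- Let `f : [0,1]^n → ℝ` be convex. Then
`G := conv {x ∈ [0,1]^n : f x ≥ 0}` is a polytope. -/
theorem convexHull_superlevel_of_convex_is_polytope (n : ℕ) (f : (Fin n → ℝ) → ℝ)
    (hf : ConvexOn ℝ (Set.Icc 0 1) f) :
    ∃ F : Finset (Fin n → ℝ),
      convexHull ℝ {x ∈ Set.Icc (0 : Fin n → ℝ) 1 | 0 ≤ f x} = convexHull ℝ (↑F : Set (Fin n → ℝ)) := by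
  rw [← convexHull_pi_pair_eq_Icc zero_le_one] at hf ⊢
  exact convexHull_superlevel_of_convex_is_polytope_general (Finite.pi fun _ ↦ toFinite _) hf 0
end

section
/- Let r, s ∈ ℝ and τ > 0, and define S₀^> = {(x,y) ∈ [0,1]² : x − r ≥ 0, y − s ≥ 0, (x − r)(y − s) = τ}. Then conv(S₀^>) = {(x,y) ∈ [0,1]² : x − r ≥ 0, y − s ≥ 0, (x − r)(y − s) ≥ τ} ∩ conv({(x,y) ∈ [0,1]² : x − r ≥ 0, y − s ≥ 0, (x − r)(y − s) ≤ τ}). -/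
/-!
If `x` is a convex combination of points `aᵢ` and each segment `[x, aᵢ]` contains some `bᵢ`, then
`x` is a convex combination of the `bᵢ`: either `x` is one of them, or the directions `bᵢ - x` are
positive multiples of the directions `aᵢ - x`. For a continuous `f` on a convex set, a point with
`τ ≤ f x` in the hull of `{f ≤ τ}` is of this kind with `bᵢ ∈ {f = τ}`, by the intermediate value
theorem. The reverse inclusion comes from the convexity of `{τ ≤ f}` when `f` is a product of
nonnegative concave functions.
-/

open Set

theorem mem_convexHull_of_segment_inter_nonempty {𝕜 E : Type*} [Field 𝕜] [LinearOrder 𝕜]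
    [IsStrictOrderedRing 𝕜] [AddCommGroup E] [Module 𝕜 E] {A B : Set E} {x : E}
    (hx : x ∈ convexHull 𝕜 A) (hAB : ∀ a ∈ A, (segment 𝕜 x a ∩ B).Nonempty) :
    x ∈ convexHull 𝕜 B := by
  by_cases hxB : x ∈ B
  · exact subset_convexHull 𝕜 B hxB
  let K : ConvexCone 𝕜 E := ConvexCone.hull 𝕜 ((fun v ↦ x + v) ⁻¹' convexHull 𝕜 B)
  have hAK : A ⊆ (fun y ↦ -x + y) ⁻¹' K := by
    intro a ha
    obtain ⟨b, hb, hbB⟩ := hAB a ha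
    rw [segment_eq_image'] at hb
    obtain ⟨t, ⟨ht_nonneg, -⟩, rfl⟩ := hb
    have ht_ne : t ≠ 0 := by
      rintro rfl
      simp [hxB] at hbB
    have hdir : t • (a - x) ∈ K := ConvexCone.subset_hull (subset_convexHull 𝕜 B hbB)
    simpa only [mem_preimage, SetLike.mem_coe, neg_add_eq_sub] using
      (K.smul_mem_iff (ht_nonneg.lt_of_ne' ht_ne)).1 hdir
  have hxK : -x + x ∈ K := convexHull_min hAK (K.convex.translate_preimage_right (-x)) hx
  rw [neg_add_cancel, ConvexCone.mem_hull_of_convex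
    ((convex_convexHull 𝕜 B).translate_preimage_right x)] at hxK
  obtain ⟨t, ht, h0⟩ := hxK
  simpa using (zero_mem_smul_set_iff ht.ne').1 h0

section LevelSets

variable {E β : Type*} [AddCommGroup E] [Module ℝ E] [TopologicalSpace E]
  [ContinuousAdd E] [ContinuousSMul ℝ E]
  [LinearOrder β] [TopologicalSpace β] [OrderClosedTopology β]
  {C : Set E} {f : E → β} {τ : β}

theorem superlevel_inter_convexHull_sublevel_subset (hC : Convex ℝ C) (hf : ContinuousOn f C) :
    {x ∈ C | τ ≤ f x} ∩ convexHull ℝ {x ∈ C | f x ≤ τ} ⊆ convexHull ℝ {x ∈ C | f x = τ} := by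
  rintro x ⟨⟨hxC, hτx⟩, hx⟩
  refine mem_convexHull_of_segment_inter_nonempty hx ?_
  rintro a ⟨haC, haτ⟩
  have hseg : segment ℝ x a ⊆ C := hC.segment_subset hxC haC
  obtain ⟨b, hb, hbτ⟩ := (convex_segment x a).isPreconnected.intermediate_value
    (right_mem_segment ℝ x a) (left_mem_segment ℝ x a) (hf.mono hseg) ⟨haτ, hτx⟩
  exact ⟨b, hb, hseg hb, hbτ⟩

theorem convexHull_level_eq_superlevel_inter_convexHull_sublevel (hC : Convex ℝ C)
    (hf : ContinuousOn f C) (hτ : Convex ℝ {x ∈ C | τ ≤ f x}) :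
    convexHull ℝ {x ∈ C | f x = τ} =
      {x ∈ C | τ ≤ f x} ∩ convexHull ℝ {x ∈ C | f x ≤ τ} := by
  refine (subset_inter ?_ ?_).antisymm (superlevel_inter_convexHull_sublevel_subset hC hf)
  · exact convexHull_min (fun x hx ↦ ⟨hx.1, hx.2.ge⟩) hτ
  · exact convexHull_mono fun x hx ↦ ⟨hx.1, hx.2.le⟩

end LevelSets

section Product

variable {𝕜 : Type*} [CommRing 𝕜] [LinearOrder 𝕜] [IsStrictOrderedRing 𝕜]

theorem two_mul_le_mul_add_mul_of_le_mul {t u v u' v' : 𝕜} (hu : 0 ≤ u) (hv : 0 ≤ v)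
    (hu' : 0 ≤ u') (hv' : 0 ≤ v') (h : t ≤ u * v) (h' : t ≤ u' * v') :
    2 * t ≤ u * v' + u' * v := by
  rcases le_total u u' with huu | huu <;> rcases le_total v v' with hvv | hvv
  · linarith [mul_le_mul_of_nonneg_left hvv hu, mul_le_mul_of_nonneg_right huu hv]
  · linarith [mul_add_mul_le_mul_add_mul huu hvv]
  · linarith [mul_add_mul_le_mul_add_mul huu hvv]
  · linarith [mul_le_mul_of_nonneg_left hvv hu', mul_le_mul_of_nonneg_right huu hv']

theorem quasiconcaveOn_mul_of_concaveOn {E : Type*} [AddCommMonoid E] [Module 𝕜 E]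
    {C : Set E} {f g : E → 𝕜} (hf : ConcaveOn 𝕜 C f) (hg : ConcaveOn 𝕜 C g)
    (hf_nonneg : ∀ x ∈ C, 0 ≤ f x) (hg_nonneg : ∀ x ∈ C, 0 ≤ g x) :
    QuasiconcaveOn 𝕜 C fun x ↦ f x * g x := by
  rintro t x ⟨hx, htx⟩ y ⟨hy, hty⟩ a b ha hb hab
  have hz : a • x + b • y ∈ C := hf.1 hx hy ha hb hab
  have hcross : 2 * t ≤ f x * g y + f y * g x :=
    two_mul_le_mul_add_mul_of_le_mul (hf_nonneg x hx) (hg_nonneg x hx) (hf_nonneg y hy)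
      (hg_nonneg y hy) htx hty
  have hg_comb : 0 ≤ a • g x + b • g y :=
    add_nonneg (smul_nonneg ha (hg_nonneg x hx)) (smul_nonneg hb (hg_nonneg y hy))
  refine ⟨hz, ?_⟩
  calc t = (a + b) ^ 2 * t := by rw [hab, one_pow, one_mul]
    _ = a ^ 2 * t + b ^ 2 * t + a * b * (2 * t) := by ring
    _ ≤ a ^ 2 * (f x * g x) + b ^ 2 * (f y * g y) + a * b * (f x * g y + f y * g x) := by
      gcongr
    _ = (a • f x + b • f y) * (a • g x + b • g y) := by simp only [smul_eq_mul]; ring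
    _ ≤ f (a • x + b • y) * g (a • x + b • y) :=
      mul_le_mul (hf.2 hx hy ha hb hab) (hg.2 hx hy ha hb hab) hg_comb (hf_nonneg _ hz)

end Product

theorem convexHull_hyperbola_branch_general {C : Set (ℝ × ℝ)} (hC : Convex ℝ C) {r s : ℝ}
    (hCrs : C ⊆ Ici (r, s)) (τ : ℝ) :
    convexHull ℝ {p ∈ C | (p.1 - r) * (p.2 - s) = τ} =
      {p ∈ C | τ ≤ (p.1 - r) * (p.2 - s)} ∩
        convexHull ℝ {p ∈ C | (p.1 - r) * (p.2 - s) ≤ τ} := by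
  have hfst : ConcaveOn ℝ C fun p ↦ p.1 - r :=
    ((LinearMap.fst ℝ ℝ ℝ).concaveOn hC).sub (convexOn_const r hC)
  have hsnd : ConcaveOn ℝ C fun p ↦ p.2 - s :=
    ((LinearMap.snd ℝ ℝ ℝ).concaveOn hC).sub (convexOn_const s hC)
  have hmul : QuasiconcaveOn ℝ C fun p ↦ (p.1 - r) * (p.2 - s) :=
    quasiconcaveOn_mul_of_concaveOn hfst hsnd
      (fun p hp ↦ sub_nonneg.2 (hCrs hp).1) (fun p hp ↦ sub_nonneg.2 (hCrs hp).2)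
  exact convexHull_level_eq_superlevel_inter_convexHull_sublevel hC (by fun_prop) (hmul τ)

/-- For `r, s ∈ ℝ`, `τ > 0` and
`S₀^> = {(x,y) ∈ [0,1]² : x − r ≥ 0, y − s ≥ 0, (x − r)(y − s) = τ}`,
`conv S₀^>` equals the intersection of the set where `(x−r)(y−s) ≥ τ` with the convex hull of
the set where `(x−r)(y−s) ≤ τ`. -/
theorem convexHull_hyperbola_branch (r s τ : ℝ) (hτ : 0 < τ) :
    convexHull ℝ {p : ℝ × ℝ | p.1 ∈ Set.Icc (0:ℝ) 1 ∧ p.2 ∈ Set.Icc (0:ℝ) 1 ∧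
        0 ≤ p.1 - r ∧ 0 ≤ p.2 - s ∧ (p.1 - r) * (p.2 - s) = τ} =
      {p : ℝ × ℝ | p.1 ∈ Set.Icc (0:ℝ) 1 ∧ p.2 ∈ Set.Icc (0:ℝ) 1 ∧
        0 ≤ p.1 - r ∧ 0 ≤ p.2 - s ∧ τ ≤ (p.1 - r) * (p.2 - s)} ∩
      convexHull ℝ {p : ℝ × ℝ | p.1 ∈ Set.Icc (0:ℝ) 1 ∧ p.2 ∈ Set.Icc (0:ℝ) 1 ∧
        0 ≤ p.1 - r ∧ 0 ≤ p.2 - s ∧ (p.1 - r) * (p.2 - s) ≤ τ} := by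
  have hbox : Convex ℝ ((Icc 0 1 ×ˢ Icc 0 1) ∩ Ici (r, s)) :=
    ((convex_Icc 0 1).prod (convex_Icc 0 1)).inter (convex_Ici (r, s))
  simpa only [mem_inter_iff, mem_prod, mem_Ici, Prod.le_def, ← sub_nonneg (b := r),
    ← sub_nonneg (b := s), and_assoc] using
    convexHull_hyperbola_branch_general hbox inter_subset_right τ
end

section
/- Let r, s ∈ ℝ and τ > 0. Then conv({(x,y) ∈ [0,1]² : x − r ≥ 0, y − s ≥ 0, (x − r)(y − s) ≤ τ}) is a polytope; that is, there exists a finite set F ⊆ ℝ² such that this convex hull equals conv(F). -/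
/-!
Through a point `(x, y)` of the region, the tangent line to the level curve of `(x - r) * (y - s)`
has direction `(x - r, -(y - s))`, and along it the product is
`(x - r) * (y - s) * (1 - t ^ 2)`, hence maximal at the point itself. Following this line both ways
until it leaves the rectangle stays inside the region, so the convex hull is already spanned by the
part of the region on the four edges of the rectangle. On an edge the product is affine, so that
part is a closed interval, with at most two endpoints per edge.
-/

open Set

section Polytope

variable {E F : Type*} [AddCommGroup E] [Module ℝ E] [AddCommGroup F] [Module ℝ F]

/-- A polytope in a real vector space, described by vertices: the convex hull of finitely many
points. The empty set counts as a polytope. -/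
def IsPolytope (K : Set E) : Prop :=
  ∃ V : Finset E, K = convexHull ℝ (V : Set E)

theorem IsPolytope.image {K : Set E} (hK : IsPolytope K) (f : E →ᵃ[ℝ] F) :
    IsPolytope (f '' K) := by
  classical
  obtain ⟨V, rfl⟩ := hK
  exact ⟨V.image f, by rw [Finset.coe_image, f.image_convexHull]⟩

theorem IsPolytope.convexHull_union {K L : Set E} (hK : IsPolytope K) (hL : IsPolytope L) :
    IsPolytope (convexHull ℝ (K ∪ L)) := by
  classical
  obtain ⟨V, rfl⟩ := hK
  obtain ⟨W, rfl⟩ := hL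
  exact ⟨V ∪ W, by rw [convexHull_convexHull_union_left, convexHull_convexHull_union_right,
    Finset.coe_union]⟩

theorem IsPolytope.convexHull_union_union_union {K L M N : Set E} (hK : IsPolytope K)
    (hL : IsPolytope L) (hM : IsPolytope M) (hN : IsPolytope N) :
    IsPolytope (convexHull ℝ ((K ∪ L) ∪ (M ∪ N))) := by
  rw [← convexHull_convexHull_union_left, ← convexHull_convexHull_union_right]
  exact (hK.convexHull_union hL).convexHull_union (hM.convexHull_union hN)

theorem isPolytope_of_isCompact_of_convex {I : Set ℝ} (hI : IsCompact I) (hI' : Convex ℝ I) :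
    IsPolytope I := by
  rcases I.eq_empty_or_nonempty with rfl | hne
  · exact ⟨∅, by simp⟩
  · have I_eq_Icc := eq_Icc_of_connected_compact ⟨hne, hI'.isPreconnected⟩ hI
    have sInf_le_sSup : sInf I ≤ sSup I := Real.sInf_le_sSup I hI.bddBelow hI.bddAbove
    refine ⟨{sInf I, sSup I}, ?_⟩
    rw [Finset.coe_pair, convexHull_pair, segment_eq_Icc sInf_le_sSup, ← I_eq_Icc]

end Polytope

section Frontier

variable {E : Type*} [NormedAddCommGroup E] [NormedSpace ℝ E] {K : Set E}

theorem exists_nonneg_add_smul_mem_frontier (hK : Bornology.IsBounded K) {x w : E} (hx : x ∈ K)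
    (hw : w ≠ 0) : ∃ t : ℝ, 0 ≤ t ∧ x + t • w ∈ frontier K := by
  -- The absolute value makes the whole line `ℝ` parametrize the ray.
  let ray : ℝ → E := fun t ↦ x + |t| • w
  have ray_leaves : ray ⁻¹' K ≠ univ := by
    obtain ⟨R, hR⟩ := hK.exists_norm_le
    intro h
    have far_mem : ray ((R + ‖x‖ + 1) / ‖w‖) ∈ K := eq_univ_iff_forall.1 h _
    have R_nonneg : 0 ≤ R := (norm_nonneg x).trans (hR x hx)
    have norm_smul_eq : ‖|(R + ‖x‖ + 1) / ‖w‖| • w‖ = R + ‖x‖ + 1 := by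
      rw [norm_smul, Real.norm_eq_abs, abs_abs, abs_of_nonneg (by positivity),
        div_mul_cancel₀ _ (norm_ne_zero_iff.2 hw)]
    have norm_smul_le := norm_le_add_norm_add (|(R + ‖x‖ + 1) / ‖w‖| • w) x
    rw [add_comm _ x] at norm_smul_le
    linarith [hR _ far_mem]
  obtain ⟨t, ht⟩ := nonempty_frontier_iff.2 ⟨⟨0, by simpa [ray] using hx⟩, ray_leaves⟩
  have ray_continuous : Continuous ray := by fun_prop
  exact ⟨|t|, abs_nonneg t, ray_continuous.frontier_preimage_subset K ht⟩

theorem exists_mem_segment_add_smul_frontier (hK : Bornology.IsBounded K) {x w : E} (hx : x ∈ K)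
    (hw : w ≠ 0) :
    ∃ a b : ℝ, x + a • w ∈ frontier K ∧ x + b • w ∈ frontier K ∧
      x ∈ segment ℝ (x + a • w) (x + b • w) := by
  obtain ⟨a, ha, hxa⟩ := exists_nonneg_add_smul_mem_frontier hK hx (neg_ne_zero.2 hw)
  obtain ⟨b, hb, hxb⟩ := exists_nonneg_add_smul_mem_frontier hK hx hw
  rw [smul_neg, ← neg_smul] at hxa
  refine ⟨-a, b, hxa, hxb, ?_⟩
  have zero_mem : (0 : ℝ) ∈ segment ℝ (-a) b := by
    rw [segment_eq_Icc (by linarith)]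
    exact ⟨by linarith, hb⟩
  let line : ℝ →ᵃ[ℝ] E := AffineMap.lineMap x (x + w)
  have line_apply (t : ℝ) : line t = x + t • w := by simp [line, AffineMap.lineMap_apply, add_comm]
  have line_zero_mem := mem_image_of_mem line zero_mem
  rwa [image_segment, line_apply, line_apply, line_apply, zero_smul, add_zero] at line_zero_mem

theorem convexHull_sep_le_eq_convexHull_frontier_sep_le {β : Type*} [Preorder β] {f : E → β}
    (hK : Bornology.IsBounded K) (hK' : IsClosed K)
    (hf : ∀ x ∈ K, ∃ w ≠ 0, ∀ t : ℝ, f (x + t • w) ≤ f x) (c : β) :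
    convexHull ℝ {x ∈ K | f x ≤ c} = convexHull ℝ {x ∈ frontier K | f x ≤ c} := by
  refine (convexHull_min ?_ (convex_convexHull ℝ _)).antisymm
    (convexHull_mono fun x hx ↦ ⟨hK'.frontier_subset hx.1, hx.2⟩)
  rintro x ⟨hxK, hxc⟩
  obtain ⟨w, hw, hfw⟩ := hf x hxK
  obtain ⟨a, b, ha, hb, hx⟩ := exists_mem_segment_add_smul_frontier hK hxK hw
  have ha_mem : x + a • w ∈ {x ∈ frontier K | f x ≤ c} := ⟨ha, (hfw a).trans hxc⟩
  have hb_mem : x + b • w ∈ {x ∈ frontier K | f x ≤ c} := ⟨hb, (hfw b).trans hxc⟩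
  exact segment_subset_convexHull ha_mem hb_mem hx

end Frontier

section Hyperbola

variable {r s : ℝ}

theorem exists_ne_zero_forall_add_smul_mul_le {p : ℝ × ℝ} (hp : 0 ≤ (p.1 - r) * (p.2 - s)) :
    ∃ w : ℝ × ℝ, w ≠ 0 ∧
      ∀ t : ℝ, ((p + t • w).1 - r) * ((p + t • w).2 - s) ≤ (p.1 - r) * (p.2 - s) := by
  by_cases hcenter : p.1 - r = 0 ∧ p.2 - s = 0
  · refine ⟨(1, -1), by simp, fun t ↦ ?_⟩
    calc ((p + t • ((1, -1) : ℝ × ℝ)).1 - r) * ((p + t • ((1, -1) : ℝ × ℝ)).2 - s)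
        = (p.1 - r + t) * (p.2 - s - t) := by
          simp only [Prod.smul_mk, smul_eq_mul, Prod.fst_add, Prod.snd_add]
          ring
      _ ≤ (p.1 - r) * (p.2 - s) := by
          rw [hcenter.1, hcenter.2]
          linarith [sq_nonneg t]
  · refine ⟨(p.1 - r, -(p.2 - s)), by simpa only [ne_eq, Prod.mk_eq_zero, neg_eq_zero], fun t ↦ ?_⟩
    calc ((p + t • (p.1 - r, -(p.2 - s))).1 - r) * ((p + t • (p.1 - r, -(p.2 - s))).2 - s)
        = (p.1 - r) * (p.2 - s) - t ^ 2 * ((p.1 - r) * (p.2 - s)) := by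
          simp only [Prod.smul_mk, smul_eq_mul, Prod.fst_add, Prod.snd_add]
          ring
      _ ≤ (p.1 - r) * (p.2 - s) := sub_le_self _ (mul_nonneg (sq_nonneg t) hp)

variable (r s)

theorem isPolytope_Icc_sep_mul_le (m c d τ : ℝ) :
    IsPolytope {y ∈ Icc c d | m * (y - s) ≤ τ} := by
  have closed : IsClosed {y : ℝ | m * (y - s) ≤ τ} := isClosed_le (by fun_prop) continuous_const
  have convex : Convex ℝ {y : ℝ | m * (y - s) ≤ τ} := by
    simp only [mul_sub, sub_le_iff_le_add]
    exact convex_halfSpace_le (IsLinearMap.isLinearMap_smul m) _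
  exact isPolytope_of_isCompact_of_convex (isCompact_Icc.inter_right closed)
    ((convex_Icc c d).inter convex)

theorem isPolytope_singleton_prod_Icc_sep_mul_le (x c d τ : ℝ) :
    IsPolytope {p ∈ ({x} : Set ℝ) ×ˢ Icc c d | (p.1 - r) * (p.2 - s) ≤ τ} := by
  let verticalLine : ℝ →ᵃ[ℝ] ℝ × ℝ := (AffineMap.const ℝ ℝ x).prod (AffineMap.id ℝ ℝ)
  convert (isPolytope_Icc_sep_mul_le s (x - r) c d τ).image verticalLine using 1
  ext p
  constructor
  · rintro ⟨⟨rfl, hsnd⟩, hmul⟩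
    exact ⟨p.2, ⟨hsnd, hmul⟩, rfl⟩
  · rintro ⟨_, ⟨hsnd, hmul⟩, rfl⟩
    exact ⟨⟨rfl, hsnd⟩, hmul⟩

theorem isPolytope_Icc_prod_singleton_sep_mul_le (a b y τ : ℝ) :
    IsPolytope {p ∈ Icc a b ×ˢ ({y} : Set ℝ) | (p.1 - r) * (p.2 - s) ≤ τ} := by
  convert (isPolytope_singleton_prod_Icc_sep_mul_le s r y a b τ).image
    (LinearEquiv.prodComm ℝ ℝ ℝ).toLinearMap.toAffineMap using 1
  ext p
  constructor
  · rintro ⟨⟨hfst, hsnd⟩, hmul⟩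
    exact ⟨p.swap, ⟨⟨hsnd, hfst⟩, by rwa [mul_comm]⟩, rfl⟩
  · rintro ⟨_, ⟨⟨hsnd, hfst⟩, hmul⟩, rfl⟩
    exact ⟨⟨hfst, hsnd⟩, by rwa [mul_comm]⟩

theorem isPolytope_convexHull_frontier_sep_mul_le {a b c d : ℝ} (hab : a ≤ b) (hcd : c ≤ d)
    (τ : ℝ) :
    IsPolytope (convexHull ℝ
      {p ∈ frontier (Icc a b ×ˢ Icc c d) | (p.1 - r) * (p.2 - s) ≤ τ}) := by
  convert (isPolytope_Icc_prod_singleton_sep_mul_le r s a b c τ).convexHull_union_union_union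
    (isPolytope_Icc_prod_singleton_sep_mul_le r s a b d τ)
    (isPolytope_singleton_prod_Icc_sep_mul_le r s a c d τ)
    (isPolytope_singleton_prod_Icc_sep_mul_le r s b c d τ) using 2
  rw [frontier_prod_eq, closure_Icc, closure_Icc, frontier_Icc hab, frontier_Icc hcd,
    insert_eq c, insert_eq a, prod_union, union_prod]
  ext p
  simp only [mem_union, mem_ofPred_eq, or_and_right]

variable {r s}

theorem isPolytope_convexHull_Icc_prod_Icc_sep_mul_le {a c : ℝ} (hra : r ≤ a) (hsc : s ≤ c)
    (b d τ : ℝ) :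
    IsPolytope (convexHull ℝ {p ∈ Icc a b ×ˢ Icc c d | (p.1 - r) * (p.2 - s) ≤ τ}) := by
  rcases (Icc a b ×ˢ Icc c d).eq_empty_or_nonempty with hempty | ⟨q, hq⟩
  · exact ⟨∅, by simp [hempty]⟩
  have bounded : Bornology.IsBounded (Icc a b ×ˢ Icc c d) :=
    (Metric.isBounded_Icc a b).prod (Metric.isBounded_Icc c d)
  have mul_nonneg_of_mem : ∀ p ∈ Icc a b ×ˢ Icc c d, 0 ≤ (p.1 - r) * (p.2 - s) := fun p hp ↦
    mul_nonneg (sub_nonneg.2 (hra.trans hp.1.1)) (sub_nonneg.2 (hsc.trans hp.2.1))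
  rw [convexHull_sep_le_eq_convexHull_frontier_sep_le bounded (isClosed_Icc.prod isClosed_Icc)
    (f := fun p ↦ (p.1 - r) * (p.2 - s))
    fun p hp ↦ exists_ne_zero_forall_add_smul_mul_le (mul_nonneg_of_mem p hp)]
  exact isPolytope_convexHull_frontier_sep_mul_le r s (hq.1.1.trans hq.1.2) (hq.2.1.trans hq.2.2) τ

end Hyperbola

/-- For `r, s ∈ ℝ` and `τ > 0`,
`conv {(x,y) ∈ [0,1]² : x − r ≥ 0, y − s ≥ 0, (x − r)(y − s) ≤ τ}` is a polytope. -/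
theorem convexHull_hyperbola_lower_set_is_polytope (r s τ : ℝ) (hτ : 0 < τ) :
    ∃ F : Finset (ℝ × ℝ),
      convexHull ℝ {p : ℝ × ℝ | p.1 ∈ Set.Icc (0:ℝ) 1 ∧ p.2 ∈ Set.Icc (0:ℝ) 1 ∧
          0 ≤ p.1 - r ∧ 0 ≤ p.2 - s ∧ (p.1 - r) * (p.2 - s) ≤ τ} =
        convexHull ℝ (↑F : Set (ℝ × ℝ)) := by
  change IsPolytope (convexHull ℝ _)
  convert isPolytope_convexHull_Icc_prod_Icc_sep_mul_le (le_max_right 0 r) (le_max_right 0 s)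
    1 1 τ using 2
  ext p
  simp only [mem_ofPred_eq, mem_prod, mem_Icc, max_le_iff, sub_nonneg]
  tauto
end

section
/- Let a₀, a₁ ∈ ℝ and a₂ > 0, and define S₀ = {(x,y) ∈ [0,1]² : y = a₀ + a₁x + a₂x²}. Then conv(S₀) = {(x,y) ∈ [0,1]² : y ≥ a₀ + a₁x + a₂x²} ∩ conv({(x,y) ∈ [0,1]² : y ≤ a₀ + a₁x + a₂x²}). -/
/-!
Let `f` be convex and `g` concave, and let `p` be a point with `f p < g p` that is a convex
combination of points `q` with `g q ≤ f q`. On each segment from `p` to such a `q`, the intermediate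
value theorem yields a point of `{g = f}` other than `p`, so `p + t (q - p) ∈ conv {g = f}` for some
`t > 0`. The points `q` with this property form a convex cone with apex `p`. Being a convex
combination of such points, `p` has the property as well, which says that `p ∈ conv {g = f}`. The
parabola is the case `f (x, y) = a₀ + a₁ x + a₂ x²`, `g (x, y) = y`.
-/

open AffineMap Set

section Cone

variable {𝕜 E : Type*} [Field 𝕜] [LinearOrder 𝕜] [IsStrictOrderedRing 𝕜]
  [AddCommGroup E] [Module 𝕜 E]

theorem convex_setOf_exists_pos_lineMap_mem {K : Set E} (hK : Convex 𝕜 K) (p : E) :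
    Convex 𝕜 {q | ∃ t : 𝕜, 0 < t ∧ lineMap p q t ∈ K} := by
  let cone : ConvexCone 𝕜 E := ConvexCone.hull 𝕜 ((· + p) ⁻¹' K)
  have mem_cone (q : E) : q + -p ∈ cone ↔ ∃ t : 𝕜, 0 < t ∧ lineMap p q t ∈ K := by
    rw [ConvexCone.mem_hull_of_convex (hK.translate_preimage_left p), inv_surjective.exists]
    refine exists_congr fun t ↦ ?_
    rw [inv_pos]
    refine and_congr_right fun ht ↦ ?_
    rw [mem_inv_smul_set_iff₀ ht.ne', mem_preimage, ← sub_eq_add_neg, lineMap_apply_module']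
  simpa only [preimage, SetLike.mem_coe, mem_cone] using cone.convex.translate_preimage_left (-p)

theorem mem_convexHull_of_forall_exists_pos_lineMap_mem {S T : Set E} {p : E}
    (hp : p ∈ convexHull 𝕜 S) (hST : ∀ q ∈ S, ∃ t : 𝕜, 0 < t ∧ lineMap p q t ∈ convexHull 𝕜 T) :
    p ∈ convexHull 𝕜 T := by
  obtain ⟨t, -, ht⟩ :=
    convexHull_min hST (convex_setOf_exists_pos_lineMap_mem (convex_convexHull 𝕜 T) p) hp
  rwa [lineMap_same_apply] at ht

end Cone

section LevelSet

variable {E : Type*} [AddCommGroup E] [Module ℝ E] [TopologicalSpace E]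
  [IsTopologicalAddGroup E] [ContinuousSMul ℝ E]

theorem exists_mem_Ioc_lineMap_eq_of_lt_of_le {α : Type*} [LinearOrder α] [TopologicalSpace α]
    [OrderClosedTopology α] {f g : E → α} {p q : E} (hf : ContinuousOn f (segment ℝ p q))
    (hg : ContinuousOn g (segment ℝ p q)) (hp : f p < g p) (hq : g q ≤ f q) :
    ∃ t ∈ Ioc (0 : ℝ) 1, g (lineMap p q t) = f (lineMap p q t) := by
  have hline : ContinuousOn (lineMap p q : ℝ → E) (Icc 0 1) := lineMap_continuous.continuousOn
  have hmaps : MapsTo (lineMap p q : ℝ → E) (Icc 0 1) (segment ℝ p q) :=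
    fun _ ↦ lineMap_mem_segment ℝ p q
  obtain ⟨t, ht, hfg⟩ := isPreconnected_Icc.intermediate_value₂
    (left_mem_Icc.2 zero_le_one) (right_mem_Icc.2 zero_le_one)
    (hf.comp hline hmaps) (hg.comp hline hmaps) (by simpa using hp.le) (by simpa using hq)
  have ht_ne : t ≠ 0 := by
    rintro rfl
    exact hp.ne (by simpa using hfg)
  exact ⟨t, ⟨ht.1.lt_of_ne' ht_ne, ht.2⟩, hfg.symm⟩

variable {C : Set E} {f g : E → ℝ}

theorem convexHull_sep_eq_eq_inter_convexHull_sep_le (hf : ConvexOn ℝ C f) (hg : ConcaveOn ℝ C g)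
    (hfc : ContinuousOn f C) (hgc : ContinuousOn g C) :
    convexHull ℝ {x ∈ C | g x = f x} =
      {x ∈ C | f x ≤ g x} ∩ convexHull ℝ {x ∈ C | g x ≤ f x} := by
  apply Subset.antisymm
  · have hconvex : Convex ℝ {x ∈ C | f x ≤ g x} := by
      simpa only [Pi.sub_apply, sub_nonpos] using (hf.sub hg).convex_le 0
    exact subset_inter (convexHull_min (fun x hx ↦ ⟨hx.1, hx.2.ge⟩) hconvex)
      (convexHull_mono fun x hx ↦ ⟨hx.1, hx.2.le⟩)
  · rintro p ⟨⟨hpC, hfg⟩, hp⟩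
    obtain hfg | hfg := hfg.eq_or_lt
    · exact subset_convexHull ℝ _ ⟨hpC, hfg.symm⟩
    · refine mem_convexHull_of_forall_exists_pos_lineMap_mem hp fun q ⟨hqC, hq⟩ ↦ ?_
      have hseg : segment ℝ p q ⊆ C := hf.1.segment_subset hpC hqC
      obtain ⟨t, ht, heq⟩ :=
        exists_mem_Ioc_lineMap_eq_of_lt_of_le (hfc.mono hseg) (hgc.mono hseg) hfg hq
      exact ⟨t, ht.1, subset_convexHull ℝ _
        ⟨hf.1.lineMap_mem hpC hqC (Ioc_subset_Icc_self ht), heq⟩⟩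

theorem convexHull_parabola_general {s : Set E} {t : Set ℝ} (ht : Convex ℝ t)
    (hf : ConvexOn ℝ s f) (hfc : ContinuousOn f s) :
    convexHull ℝ {p : E × ℝ | p.1 ∈ s ∧ p.2 ∈ t ∧ p.2 = f p.1} =
      {p : E × ℝ | p.1 ∈ s ∧ p.2 ∈ t ∧ f p.1 ≤ p.2} ∩
        convexHull ℝ {p : E × ℝ | p.1 ∈ s ∧ p.2 ∈ t ∧ p.2 ≤ f p.1} := by
  have hst : Convex ℝ (s ×ˢ t) := hf.1.prod ht
  have hf_fst : ConvexOn ℝ (s ×ˢ t) fun p ↦ f p.1 :=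
    (hf.comp_linearMap (LinearMap.fst ℝ E ℝ)).subset (fun p hp ↦ hp.1) hst
  have hsnd : ConcaveOn ℝ (s ×ˢ t) fun p ↦ p.2 := (LinearMap.snd ℝ E ℝ).concaveOn hst
  simpa only [mem_prod, and_assoc] using convexHull_sep_eq_eq_inter_convexHull_sep_le hf_fst hsnd
    (hfc.comp continuousOn_fst fun p hp ↦ hp.1) continuousOn_snd

end LevelSet

theorem convexOn_quadratic {𝕜 : Type*} [Field 𝕜] [LinearOrder 𝕜] [IsStrictOrderedRing 𝕜]
    (a₀ a₁ : 𝕜) {a₂ : 𝕜} (ha₂ : 0 ≤ a₂) :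
    ConvexOn 𝕜 univ fun x : 𝕜 ↦ a₀ + a₁ * x + a₂ * x ^ 2 :=
  ((convexOn_const a₀ convex_univ).add ((LinearMap.mulLeft 𝕜 a₁).convexOn convex_univ)).add
    (even_two.convexOn_pow.smul ha₂)

/-- For `a₀, a₁ ∈ ℝ`, `a₂ > 0` and
`S₀ = {(x,y) ∈ [0,1]² : y = a₀ + a₁x + a₂x²}`,
`conv S₀ = {(x,y) ∈ [0,1]² : y ≥ a₀ + a₁x + a₂x²} ∩ conv {(x,y) ∈ [0,1]² : y ≤ a₀ + a₁x + a₂x²}`. -/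
theorem convexHull_parabola (a₀ a₁ a₂ : ℝ) (ha₂ : 0 < a₂) :
    convexHull ℝ {p : ℝ × ℝ | p.1 ∈ Set.Icc (0:ℝ) 1 ∧ p.2 ∈ Set.Icc (0:ℝ) 1 ∧
        p.2 = a₀ + a₁ * p.1 + a₂ * p.1 ^ 2} =
      {p : ℝ × ℝ | p.1 ∈ Set.Icc (0:ℝ) 1 ∧ p.2 ∈ Set.Icc (0:ℝ) 1 ∧
        a₀ + a₁ * p.1 + a₂ * p.1 ^ 2 ≤ p.2} ∩
      convexHull ℝ {p : ℝ × ℝ | p.1 ∈ Set.Icc (0:ℝ) 1 ∧ p.2 ∈ Set.Icc (0:ℝ) 1 ∧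
        p.2 ≤ a₀ + a₁ * p.1 + a₂ * p.1 ^ 2} := by
  exact convexHull_parabola_general (convex_Icc 0 1)
    ((convexOn_quadratic a₀ a₁ ha₂.le).subset (subset_univ _) (convex_Icc 0 1)) (by fun_prop)
end

section
/- The convex hull of the set {(x,y,w) ∈ [0,1]³ : w = xy} equals the McCormick polytope {(x,y,w) ∈ ℝ³ : 0 ≤ x ≤ 1, 0 ≤ y ≤ 1, w ≥ 0, w ≥ x + y − 1, w ≤ x, w ≤ y}. -/
/-!
The McCormick polytope is a tetrahedron: its vertices are the four points of the graph of
multiplication above the corners of the unit square, and the barycentric coordinates of `(x, y, w)`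
are `w`, `x - w`, `y - w` and `1 - x - y + w`. On the graph `w = x * y` these coordinates factor as
`x * y`, `x * (1 - y)`, `(1 - x) * y` and `(1 - x) * (1 - y)`, so the graph above the unit square
lies in the tetrahedron; since it contains the vertices, its convex hull is the whole tetrahedron.
-/

section Definitions

variable (𝕜 : Type*) [Ring 𝕜] [PartialOrder 𝕜]

/-- The graph `w = x * y` of multiplication inside the unit cube; a point `(x, y, w)` is encoded as
a nested pair. -/
def unitMulGraph : Set (𝕜 × 𝕜 × 𝕜) :=
  {p | p.1 ∈ Set.Icc 0 1 ∧ p.2.1 ∈ Set.Icc 0 1 ∧ p.2.2 ∈ Set.Icc 0 1 ∧ p.2.2 = p.1 * p.2.1}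

/-- The McCormick relaxation of `w = x * y` over the unit square, given by its linear inequalities
in `(x, y, w)`. -/
def mcCormickPolytope : Set (𝕜 × 𝕜 × 𝕜) :=
  {p | 0 ≤ p.1 ∧ p.1 ≤ 1 ∧ 0 ≤ p.2.1 ∧ p.2.1 ≤ 1 ∧
    0 ≤ p.2.2 ∧ p.1 + p.2.1 - 1 ≤ p.2.2 ∧ p.2.2 ≤ p.1 ∧ p.2.2 ≤ p.2.1}

end Definitions

section Ring

variable {𝕜 : Type*} [Ring 𝕜]

variable (𝕜) in
/-- The vertices of the McCormick polytope: the points of the graph of multiplication above the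
corners of the unit square. -/
def mcCormickVertex : Fin 4 → 𝕜 × 𝕜 × 𝕜 :=
  ![(1, 1, 1), (1, 0, 0), (0, 1, 0), (0, 0, 0)]

/-- The barycentric coordinates of a point with respect to `mcCormickVertex`, in the same order. -/
def mcCormickCoord (p : 𝕜 × 𝕜 × 𝕜) : Fin 4 → 𝕜 :=
  ![p.2.2, p.1 - p.2.2, p.2.1 - p.2.2, 1 - p.1 - p.2.1 + p.2.2]

theorem sum_mcCormickCoord (p : 𝕜 × 𝕜 × 𝕜) : ∑ i, mcCormickCoord p i = 1 := by
  simp only [mcCormickCoord, Fin.sum_univ_four, Matrix.cons_val]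
  abel

theorem sum_mcCormickCoord_smul_mcCormickVertex (p : 𝕜 × 𝕜 × 𝕜) :
    ∑ i, mcCormickCoord p i • mcCormickVertex 𝕜 i = p := by
  simp [mcCormickCoord, mcCormickVertex, Fin.sum_univ_four]

theorem mcCormickCoord_smul_add_smul (p q : 𝕜 × 𝕜 × 𝕜) {a b : 𝕜} (hab : a + b = 1) :
    mcCormickCoord (a • p + b • q) = a • mcCormickCoord p + b • mcCormickCoord q := by
  obtain rfl : b = 1 - a := eq_sub_of_add_eq' hab
  simp only [mcCormickCoord, Prod.fst_add, Prod.snd_add, Prod.smul_fst, Prod.smul_snd, smul_eq_mul,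
    Matrix.smul_cons, Matrix.smul_empty, Matrix.add_cons, Matrix.head_cons, Matrix.tail_cons,
    Matrix.empty_add_empty]
  congrm ![?_, ?_, ?_, ?_] <;> noncomm_ring

theorem mcCormickCoord_mul (x y : 𝕜) :
    mcCormickCoord (x, y, x * y) = ![x * y, x * (1 - y), (1 - x) * y, (1 - x) * (1 - y)] := by
  rw [mcCormickCoord]
  congrm ![?_, ?_, ?_, ?_] <;> noncomm_ring

variable [PartialOrder 𝕜] [IsOrderedRing 𝕜]

theorem mcCormickCoord_nonneg_iff {x y w : 𝕜} :
    0 ≤ mcCormickCoord (x, y, w) ↔ 0 ≤ w ∧ x + y - 1 ≤ w ∧ w ≤ x ∧ w ≤ y := by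
  have last_coord : 1 - x - y + w = w - (x + y - 1) := by abel
  simp only [mcCormickCoord, last_coord, Pi.le_def, Fin.forall_fin_succ, IsEmpty.forall_iff,
    Pi.zero_apply, Matrix.cons_val_zero, Matrix.cons_val_succ, sub_nonneg]
  tauto

theorem mem_mcCormickPolytope_iff {p : 𝕜 × 𝕜 × 𝕜} :
    p ∈ mcCormickPolytope 𝕜 ↔ 0 ≤ mcCormickCoord p := by
  obtain ⟨x, y, w⟩ := p
  rw [mcCormickCoord_nonneg_iff]
  constructor
  · rintro ⟨-, -, -, -, h⟩
    exact h
  · rintro ⟨hw, hxyw, hwx, hwy⟩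
    have hx : x - 1 ≤ 0 := by simpa [add_sub_right_comm] using hxyw.trans hwy
    have hy : y - 1 ≤ 0 := by simpa [add_sub_assoc] using hxyw.trans hwx
    exact ⟨hw.trans hwx, sub_nonpos.1 hx, hw.trans hwy, sub_nonpos.1 hy, hw, hxyw, hwx, hwy⟩

theorem convex_mcCormickPolytope : Convex 𝕜 (mcCormickPolytope 𝕜) := by
  intro p hp q hq a b ha hb hab
  rw [mem_mcCormickPolytope_iff] at hp hq ⊢
  rw [mcCormickCoord_smul_add_smul p q hab]
  exact add_nonneg (smul_nonneg ha hp) (smul_nonneg hb hq)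

theorem unitMulGraph_subset_mcCormickPolytope : unitMulGraph 𝕜 ⊆ mcCormickPolytope 𝕜 := by
  rintro ⟨x, y, w⟩ ⟨⟨hx0, hx1⟩, ⟨hy0, hy1⟩, -, hw⟩
  obtain rfl : w = x * y := hw
  have hx : 0 ≤ 1 - x := sub_nonneg.2 hx1
  have hy : 0 ≤ 1 - y := sub_nonneg.2 hy1
  rw [mem_mcCormickPolytope_iff, mcCormickCoord_mul]
  intro i
  fin_cases i
  exacts [mul_nonneg hx0 hy0, mul_nonneg hx0 hy, mul_nonneg hx hy0, mul_nonneg hx hy]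

theorem mcCormickVertex_mem_unitMulGraph (i : Fin 4) : mcCormickVertex 𝕜 i ∈ unitMulGraph 𝕜 := by
  fin_cases i <;> simp [mcCormickVertex, unitMulGraph]

end Ring

section Field

variable (𝕜 : Type*) [Field 𝕜] [LinearOrder 𝕜] [IsStrictOrderedRing 𝕜]

theorem mcCormickPolytope_subset_convexHull_range_mcCormickVertex :
    mcCormickPolytope 𝕜 ⊆ convexHull 𝕜 (Set.range (mcCormickVertex 𝕜)) := fun p hp ↦
  mem_convexHull_of_exists_fintype (mcCormickCoord p) (mcCormickVertex 𝕜)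
    (mem_mcCormickPolytope_iff.1 hp) (sum_mcCormickCoord p) Set.mem_range_self
    (sum_mcCormickCoord_smul_mcCormickVertex p)

theorem convexHull_bilinear_eq_mcCormick_general :
    convexHull 𝕜 (unitMulGraph 𝕜) = mcCormickPolytope 𝕜 := by
  apply Set.Subset.antisymm
  · exact convexHull_min unitMulGraph_subset_mcCormickPolytope convex_mcCormickPolytope
  · calc
      mcCormickPolytope 𝕜 ⊆ convexHull 𝕜 (Set.range (mcCormickVertex 𝕜)) :=
        mcCormickPolytope_subset_convexHull_range_mcCormickVertex 𝕜
      _ ⊆ convexHull 𝕜 (unitMulGraph 𝕜) :=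
        convexHull_mono (Set.range_subset_iff.2 mcCormickVertex_mem_unitMulGraph)

end Field

/-- `conv {(x,y,w) ∈ [0,1]³ : w = xy}` equals the McCormick polytope. -/
theorem convexHull_bilinear_eq_mcCormick :
    convexHull ℝ {p : ℝ × ℝ × ℝ | p.1 ∈ Set.Icc (0:ℝ) 1 ∧ p.2.1 ∈ Set.Icc (0:ℝ) 1 ∧
        p.2.2 ∈ Set.Icc (0:ℝ) 1 ∧ p.2.2 = p.1 * p.2.1} =
      {p : ℝ × ℝ × ℝ | 0 ≤ p.1 ∧ p.1 ≤ 1 ∧ 0 ≤ p.2.1 ∧ p.2.1 ≤ 1 ∧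
        0 ≤ p.2.2 ∧ p.1 + p.2.1 - 1 ≤ p.2.2 ∧ p.2.2 ≤ p.1 ∧ p.2.2 ≤ p.2.1} :=
  convexHull_bilinear_eq_mcCormick_general ℝ
end

section
/- Let a, b, c ∈ ℝ with a ≠ 0 and b ≠ 0, and define S₀ = {(x,y,w) ∈ [0,1]³ : ax + by + c = 0, w = xy}. Let [α,β] = {y ∈ [0,1] : (−by − c)/a ∈ [0,1]} (assumed to be a nonempty interval with α < β), and let B₀ = {(y,w) ∈ [α,β] × [0,1] : w = (−c/a)y − (b/a)y²}. Then conv(S₀) = {(x,y,w) ∈ ℝ × [α,β] × [0,1] : (y,w) ∈ conv(B₀), x = (−by − c)/a}. -/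
/-!
On the plane `a x + b y + c = 0` the coordinate `x` is an affine function of `y`, and substituting
it into `w = x y` gives the quadratic equation that defines `B₀`. Hence `S₀` is the graph of an
affine map over `B₀`, and taking graphs of affine maps commutes with taking convex hulls.
-/

section Graph

variable {𝕜 E F : Type*} [Ring 𝕜] [PartialOrder 𝕜]
  [AddCommGroup E] [Module 𝕜 E] [AddCommGroup F] [Module 𝕜 F]

theorem convexHull_setOf_mem_and_eq_affineMap (f : E →ᵃ[𝕜] F) (s : Set E) :
    convexHull 𝕜 {p : F × E | p.2 ∈ s ∧ p.1 = f p.2} =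
      {p : F × E | p.2 ∈ convexHull 𝕜 s ∧ p.1 = f p.2} := by
  have graph_eq_image (t : Set E) :
      {p : F × E | p.2 ∈ t ∧ p.1 = f p.2} = f.prod (AffineMap.id 𝕜 E) '' t := by
    ext ⟨x, z⟩
    simp [and_comm, eq_comm]
  rw [graph_eq_image, graph_eq_image, AffineMap.image_convexHull]

end Graph

section Abscissa

variable {𝕜 : Type*} [Field 𝕜] {a : 𝕜}

/-- The abscissa `x` of the point with ordinate `y` on the line `a x + b y + c = 0`, as an affine
function of `y`. It is meaningful for `a ≠ 0`; for `a = 0` it is identically `0`. -/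
def lineAbscissa (a b c : 𝕜) : 𝕜 →ᵃ[𝕜] 𝕜 :=
  (-b / a) • AffineMap.id 𝕜 𝕜 - AffineMap.const 𝕜 𝕜 (c / a)

theorem lineAbscissa_apply (a b c y : 𝕜) : lineAbscissa a b c y = (-b * y - c) / a := by
  calc
    lineAbscissa a b c y = -b / a * y - c / a := rfl
    _ = (-b * y - c) / a := by ring

theorem eq_lineAbscissa_iff (ha : a ≠ 0) (b c x y : 𝕜) :
    x = lineAbscissa a b c y ↔ a * x + b * y + c = 0 := by
  rw [lineAbscissa_apply, eq_div_iff ha]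
  grind

theorem lineAbscissa_mul_self (a b c y : 𝕜) :
    lineAbscissa a b c y * y = (-c / a) * y - (b / a) * y ^ 2 := by
  rw [lineAbscissa_apply]
  ring

theorem setOf_bilinear_eq_setOf_mem_and_eq_lineAbscissa (ha : a ≠ 0) (b c : 𝕜)
    (X Y W : Set 𝕜) :
    {p : 𝕜 × 𝕜 × 𝕜 | p.1 ∈ X ∧ p.2.1 ∈ Y ∧ p.2.2 ∈ W ∧
        a * p.1 + b * p.2.1 + c = 0 ∧ p.2.2 = p.1 * p.2.1} =
      {p : 𝕜 × 𝕜 × 𝕜 | p.2 ∈ {z : 𝕜 × 𝕜 | (z.1 ∈ Y ∧ lineAbscissa a b c z.1 ∈ X) ∧ z.2 ∈ W ∧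
          z.2 = (-c / a) * z.1 - (b / a) * z.1 ^ 2} ∧
        p.1 = lineAbscissa a b c p.2.1} := by
  ext ⟨x, y, w⟩
  simp only [Set.mem_ofPred_eq, ← eq_lineAbscissa_iff ha, ← lineAbscissa_mul_self]
  grind

end Abscissa

theorem convexHull_bilinear_row_q_eq_zero_general {𝕜 : Type*} [Field 𝕜] [PartialOrder 𝕜]
    {a : 𝕜} (ha : a ≠ 0) (b c : 𝕜) {X Y W I : Set 𝕜}
    (hW : Convex 𝕜 W) (hI : Convex 𝕜 I) (hIeq : I = {y | y ∈ Y ∧ (-b * y - c) / a ∈ X}) :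
    convexHull 𝕜 {p : 𝕜 × 𝕜 × 𝕜 | p.1 ∈ X ∧ p.2.1 ∈ Y ∧ p.2.2 ∈ W ∧
        a * p.1 + b * p.2.1 + c = 0 ∧ p.2.2 = p.1 * p.2.1} =
      {p : 𝕜 × 𝕜 × 𝕜 | p.2.1 ∈ I ∧ p.2.2 ∈ W ∧
        (p.2.1, p.2.2) ∈ convexHull 𝕜 {z : 𝕜 × 𝕜 | z.1 ∈ I ∧ z.2 ∈ W ∧
          z.2 = (-c / a) * z.1 - (b / a) * z.1 ^ 2} ∧
        p.1 = (-b * p.2.1 - c) / a} := by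
  set B := {z : 𝕜 × 𝕜 | z.1 ∈ I ∧ z.2 ∈ W ∧ z.2 = (-c / a) * z.1 - (b / a) * z.1 ^ 2} with hB
  have hB_box : convexHull 𝕜 B ⊆ I ×ˢ W :=
    convexHull_min (fun _ hz ↦ ⟨hz.1, hz.2.1⟩) (hI.prod hW)
  calc
    _ = convexHull 𝕜 {p : 𝕜 × 𝕜 × 𝕜 | p.2 ∈ B ∧ p.1 = lineAbscissa a b c p.2.1} := by
      rw [setOf_bilinear_eq_setOf_mem_and_eq_lineAbscissa ha, hB, hIeq]
      simp only [lineAbscissa_apply, Set.mem_ofPred_eq]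
    _ = {p : 𝕜 × 𝕜 × 𝕜 | p.2 ∈ convexHull 𝕜 B ∧ p.1 = lineAbscissa a b c p.2.1} :=
      convexHull_setOf_mem_and_eq_affineMap
        ((lineAbscissa a b c).comp (LinearMap.fst 𝕜 𝕜 𝕜).toAffineMap) B
    _ = _ := by
      ext p
      simp only [lineAbscissa_apply, Set.mem_ofPred_eq]
      exact ⟨fun h ↦ ⟨(hB_box h.1).1, (hB_box h.1).2, h⟩, fun h ↦ h.2.2⟩

/-- For `a, b, c ∈ ℝ` with `a ≠ 0`, `b ≠ 0`, with
`S₀ = {(x,y,w) ∈ [0,1]³ : ax + by + c = 0, w = xy}`,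
`[α,β] = {y ∈ [0,1] : (−by − c)/a ∈ [0,1]}` (nonempty with `α < β`), and
`B₀ = {(y,w) ∈ [α,β] × [0,1] : w = (−c/a)y − (b/a)y²}`, we have
`conv S₀ = {(x,y,w) ∈ ℝ × [α,β] × [0,1] : (y,w) ∈ conv B₀, x = (−by − c)/a}`. -/
theorem convexHull_bilinear_row_q_eq_zero (a b c α β : ℝ) (ha : a ≠ 0) (hb : b ≠ 0)
    (hαβ : α < β)
    (hIcc : Set.Icc α β = {y : ℝ | y ∈ Set.Icc (0:ℝ) 1 ∧ (-b * y - c) / a ∈ Set.Icc (0:ℝ) 1}) :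
    convexHull ℝ {p : ℝ × ℝ × ℝ | p.1 ∈ Set.Icc (0:ℝ) 1 ∧ p.2.1 ∈ Set.Icc (0:ℝ) 1 ∧
        p.2.2 ∈ Set.Icc (0:ℝ) 1 ∧ a * p.1 + b * p.2.1 + c = 0 ∧ p.2.2 = p.1 * p.2.1} =
      {p : ℝ × ℝ × ℝ | p.2.1 ∈ Set.Icc α β ∧ p.2.2 ∈ Set.Icc (0:ℝ) 1 ∧
        (p.2.1, p.2.2) ∈ convexHull ℝ {z : ℝ × ℝ | z.1 ∈ Set.Icc α β ∧ z.2 ∈ Set.Icc (0:ℝ) 1 ∧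
          z.2 = (-c / a) * z.1 - (b / a) * z.1 ^ 2} ∧
        p.1 = (-b * p.2.1 - c) / a} :=
  convexHull_bilinear_row_q_eq_zero_general ha b c (convex_Icc 0 1) (convex_Icc α β) hIcc
end

section
/- Let n₁, n₂, m be positive integers, let E ⊆ {1,…,n₁} × {1,…,n₂}, and for each k ∈ {1,…,m} let Q_k ∈ ℝ^{n₁×n₂}, a_k ∈ ℝ^{n₁}, b_k ∈ ℝ^{n₂}, c_k ∈ ℝ. For each k, let S^k = {(x,y,w) ∈ [0,1]^{n₁+n₂+|E|} : Σ_{(i,j)∈E}(Q_k)_{ij} w_{ij} + a_kᵀx + b_kᵀy + c_k = 0 and w_{ij} = x_i y_j for all (i,j) ∈ E}, and let T^k be the set of tuples (x,y,H,w) with x ∈ ℝ^{n₁}, y ∈ ℝ^{n₂}, H ∈ ℝ^{(n₁+n₂)×(n₁+n₂)}, w ∈ ℝ^{E}, such that Σ_{(i,j)∈E}(Q_k)_{ij} w_{ij} + a_kᵀx + b_kᵀy + c_k = 0, w_{ij} = ½(H_{i,(j+n₁)} + H_{(j+n₁),i}) for all (i,j) ∈ E, and the block matrix [[H, z],[zᵀ,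 1]] with z = (x,y) is positive semidefinite. Define S^{SDP} = ⋂_{k=1}^m T^k and S^{SOCP} = ⋂_{k=1}^m conv(S^k). Then proj_{x,y,w}(S^{SDP}) ⊇ S^{SOCP}, where proj_{x,y,w} denotes the image under the map (x,y,H,w) ↦ (x,y,w). -/
/-!
For a point `(z, w)` with `w e = z (s e) * z (t e)`, the rank-one matrix `H = z zᵀ` certifies the
semidefinite constraint, because bordering it by `z` and `1` gives `(z, 1) (z, 1)ᵀ`. That constraint
is jointly convex in `(z, w, H)`, so the projection of its solution set to `(z, w)` is convex and
contains the convex hull of all such points. The matrix `H` found in this way depends on the point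
alone, so one certificate serves every `k`; the linear constraints are preserved by convex hulls.
-/

section BorderedMatrix

variable {ν R : Type*}

/-- The block matrix `[[H, z], [zᵀ, 1]]` bordering a square matrix by a vector. -/
def borderedMatrix [Zero R] [One R] (H : Matrix ν ν R) (z : ν → R) :
    Matrix (ν ⊕ Unit) (ν ⊕ Unit) R :=
  Matrix.fromBlocks H (Matrix.replicateCol Unit z) (Matrix.replicateRow Unit z) 1

theorem borderedMatrix_add_smul [Semiring R] {a b : R} (hab : a + b = 1)
    (H K : Matrix ν ν R) (z z' : ν → R) :
    borderedMatrix (a • H + b • K) (a • z + b • z') =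
      a • borderedMatrix H z + b • borderedMatrix K z' := by
  simp only [borderedMatrix, Matrix.fromBlocks_smul, Matrix.fromBlocks_add,
    Matrix.replicateCol_add, Matrix.replicateCol_smul, Matrix.replicateRow_add,
    Matrix.replicateRow_smul, ← add_smul, hab, one_smul]

theorem borderedMatrix_vecMulVec_self [NonAssocSemiring R] (z : ν → R) :
    borderedMatrix (Matrix.vecMulVec z z) z =
      Matrix.vecMulVec (Sum.elim z 1) (Sum.elim z 1) := by
  ext (i | i) (j | j) <;> simp [borderedMatrix, Matrix.vecMulVec_apply]

theorem posSemidef_borderedMatrix_vecMulVec_self [Finite ν] (z : ν → ℝ) :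
    (borderedMatrix (Matrix.vecMulVec z z) z).PosSemidef := by
  rw [borderedMatrix_vecMulVec_self]
  exact Matrix.posSemidef_vecMulVec_self_star (Sum.elim z (1 : Unit → ℝ))

end BorderedMatrix

section ShorLift

variable {ν ε : Type*} (s t : ε → ν)

/-- The pairs `(z, w)` in which the coordinate `w e` is the product of the two coordinates
`z (s e)` and `z (t e)`. The paper's constraints `w_ij = x_i y_j` are the case `z = (x, y)`. -/
def productGraph : Set ((ν → ℝ) × (ε → ℝ)) :=
  {p | ∀ e, p.2 e = p.1 (s e) * p.1 (t e)}

/-- The lifted (Shor) semidefinite relaxation of `productGraph s t`: the products of coordinates of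
`z` are replaced by symmetrized entries of a matrix variable `H`, the second component. -/
def shorLift : Set (((ν → ℝ) × (ε → ℝ)) × Matrix ν ν ℝ) :=
  {q | (∀ e, q.1.2 e = (q.2 (s e) (t e) + q.2 (t e) (s e)) / 2) ∧
    (borderedMatrix q.2 q.1.1).PosSemidef}

theorem convex_shorLift : Convex ℝ (shorLift s t) := by
  rintro ⟨⟨z, w⟩, H⟩ ⟨hwH, hH⟩ ⟨⟨z', w'⟩, K⟩ ⟨hwK, hK⟩ a b ha hb hab
  refine ⟨fun e => ?_, ?_⟩
  · change a * w e + b * w' e =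
      (a * H (s e) (t e) + b * K (s e) (t e) + (a * H (t e) (s e) + b * K (t e) (s e))) / 2
    linear_combination a * hwH e + b * hwK e
  · exact (borderedMatrix_add_smul hab H K z z').symm ▸ (hH.smul ha).add (hK.smul hb)

variable {s t} in
theorem mk_vecMulVec_self_mem_shorLift [Finite ν] {p : (ν → ℝ) × (ε → ℝ)}
    (hp : p ∈ productGraph s t) : (p, Matrix.vecMulVec p.1 p.1) ∈ shorLift s t := by
  refine ⟨fun e => ?_, posSemidef_borderedMatrix_vecMulVec_self p.1⟩
  simp only [Matrix.vecMulVec_apply]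
  linear_combination hp e

theorem convexHull_productGraph_subset_fst_image_shorLift [Finite ν] :
    convexHull ℝ (productGraph s t) ⊆ Prod.fst '' shorLift s t :=
  convexHull_min (fun _ hp => ⟨_, mk_vecMulVec_self_mem_shorLift hp, rfl⟩)
    ((convex_shorLift s t).linear_image (LinearMap.fst ℝ _ _))

theorem proj_SDP_supset_SOCP_general [Finite ν] {ι V : Type*} [Nonempty ι] [AddCommGroup V]
    [Module ℝ V] (L : V →ₗ[ℝ] (ν → ℝ) × (ε → ℝ)) {C : ι → Set V} (hC : ∀ k, Convex ℝ (C k)) :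
    (⋂ k, convexHull ℝ (C k ∩ L ⁻¹' productGraph s t)) ⊆
      Prod.fst '' ⋂ k, {q : V × Matrix ν ν ℝ | q.1 ∈ C k ∧ (L q.1, q.2) ∈ shorLift s t} := by
  intro p hp
  rw [Set.mem_iInter] at hp
  have mem_C (k : ι) : p ∈ C k := convexHull_min Set.inter_subset_left (hC k) (hp k)
  have mem_hull : L p ∈ convexHull ℝ (productGraph s t) :=
    convexHull_min (Set.inter_subset_right.trans (Set.preimage_mono (subset_convexHull ℝ _)))
      ((convex_convexHull ℝ _).linear_preimage L) (hp (Classical.arbitrary ι))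
  obtain ⟨⟨_, H⟩, hH, rfl⟩ := convexHull_productGraph_subset_fst_image_shorLift s t mem_hull
  exact ⟨(p, H), Set.mem_iInter.2 fun k => ⟨mem_C k, hH⟩, rfl⟩

end ShorLift

/-- The linear map `(x, y, w) ↦ (z, w)`, where `z` is the concatenation of `x` and `y`. -/
def concatBlocks (R : Type*) [Semiring R] (n₁ n₂ : ℕ) (W : Type*) [AddCommMonoid W] [Module R W] :
    ((Fin n₁ → R) × (Fin n₂ → R) × W) →ₗ[R] (Fin (n₁ + n₂) → R) × W where
  toFun p := (Fin.append p.1 p.2.1, p.2.2)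
  map_add' p q := by
    refine Prod.ext (funext (Fin.addCases (fun i => ?_) (fun j => ?_))) rfl <;> simp
  map_smul' r p := by
    refine Prod.ext (funext (Fin.addCases (fun i => ?_) (fun j => ?_))) rfl <;> simp

theorem concatBlocks_mem_productGraph_iff {n₁ n₂ : ℕ} {ε : Type*} (r : ε → Fin n₁ × Fin n₂)
    (p : (Fin n₁ → ℝ) × (Fin n₂ → ℝ) × (ε → ℝ)) :
    concatBlocks ℝ n₁ n₂ (ε → ℝ) p ∈
        productGraph (fun e => Fin.castAdd n₂ (r e).1) (fun e => Fin.natAdd n₁ (r e).2) ↔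
      ∀ e, p.2.2 e = p.1 (r e).1 * p.2.1 (r e).2 := by
  simp [concatBlocks, productGraph]

/-- The solution set of the affine equation `∑ q w + ∑ a x + ∑ b y + c = 0` in `(x, y, w)`. -/
def affineZeroSet {R α β ε : Type*} [Semiring R] [Fintype α] [Fintype β] [Fintype ε]
    (q : ε → R) (a : α → R) (b : β → R) (c : R) : Set ((α → R) × (β → R) × (ε → R)) :=
  {p | (∑ e, q e * p.2.2 e) + (∑ i, a i * p.1 i) + (∑ j, b j * p.2.1 j) + c = 0}

theorem convex_affineZeroSet {R α β ε : Type*} [CommRing R] [PartialOrder R] [Fintype α]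
    [Fintype β] [Fintype ε] (q : ε → R) (a : α → R) (b : β → R) (c : R) :
    Convex R (affineZeroSet q a b c) := by
  intro u hu v hv r r' _ _ hrr'
  simp only [affineZeroSet, Set.mem_ofPred_eq] at hu hv ⊢
  simp only [Prod.fst_add, Prod.snd_add, Prod.smul_fst, Prod.smul_snd, Pi.add_apply,
    Pi.smul_apply, smul_eq_mul, mul_add, Finset.sum_add_distrib, mul_left_comm _ r,
    mul_left_comm _ r', ← Finset.mul_sum]
  linear_combination r * hu + r' * hv - c * hrr'

/-- The projection of the SDP relaxation `S^{SDP} = ⋂ₖ T^k` onto `(x,y,w)`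
contains the SOCP relaxation `S^{SOCP} = ⋂ₖ conv(S^k)`. -/
theorem proj_SDP_supset_SOCP (n₁ n₂ m : ℕ) (hn₁ : 0 < n₁) (hn₂ : 0 < n₂) (hm : 0 < m)
    (E : Finset (Fin n₁ × Fin n₂))
    (Q : Fin m → Matrix (Fin n₁) (Fin n₂) ℝ) (a : Fin m → Fin n₁ → ℝ)
    (b : Fin m → Fin n₂ → ℝ) (c : Fin m → ℝ)
    (S : Fin m → Set ((Fin n₁ → ℝ) × (Fin n₂ → ℝ) × (↥E → ℝ)))
    (hS : ∀ k, S k = {p | (∀ i, p.1 i ∈ Set.Icc (0:ℝ) 1) ∧ (∀ j, p.2.1 j ∈ Set.Icc (0:ℝ) 1) ∧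
        (∀ e : ↥E, p.2.2 e ∈ Set.Icc (0:ℝ) 1) ∧
        (∑ e : ↥E, Q k (e : Fin n₁ × Fin n₂).1 (e : Fin n₁ × Fin n₂).2 * p.2.2 e) +
          (∑ i, a k i * p.1 i) + (∑ j, b k j * p.2.1 j) + c k = 0 ∧
        ∀ e : ↥E, p.2.2 e = p.1 (e : Fin n₁ × Fin n₂).1 * p.2.1 (e : Fin n₁ × Fin n₂).2})
    (T : Fin m → Set ((Fin n₁ → ℝ) × (Fin n₂ → ℝ) ×
        Matrix (Fin (n₁ + n₂)) (Fin (n₁ + n₂)) ℝ × (↥E → ℝ)))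
    (hT : ∀ k, T k = {p | (∑ e : ↥E, Q k (e : Fin n₁ × Fin n₂).1 (e : Fin n₁ × Fin n₂).2 *
            p.2.2.2 e) + (∑ i, a k i * p.1 i) + (∑ j, b k j * p.2.1 j) + c k = 0 ∧
        (∀ e : ↥E, p.2.2.2 e = (p.2.2.1 (Fin.castAdd n₂ (e : Fin n₁ × Fin n₂).1)
            (Fin.natAdd n₁ (e : Fin n₁ × Fin n₂).2) +
          p.2.2.1 (Fin.natAdd n₁ (e : Fin n₁ × Fin n₂).2)
            (Fin.castAdd n₂ (e : Fin n₁ × Fin n₂).1)) / 2) ∧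
        (Matrix.fromBlocks p.2.2.1
          (Matrix.of fun i (_ : Unit) => Fin.append p.1 p.2.1 i)
          (Matrix.of fun (_ : Unit) j => Fin.append p.1 p.2.1 j)
          (1 : Matrix Unit Unit ℝ)).PosSemidef}) :
    (⋂ k, convexHull ℝ (S k)) ⊆
      (fun p : (Fin n₁ → ℝ) × (Fin n₂ → ℝ) ×
          Matrix (Fin (n₁ + n₂)) (Fin (n₁ + n₂)) ℝ × (↥E → ℝ) =>
        (p.1, p.2.1, p.2.2.2)) '' ⋂ k, T k := by
  have : Nonempty (Fin m) := ⟨⟨0, hm⟩⟩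
  let row (e : ↥E) := Fin.castAdd n₂ e.1.1
  let col (e : ↥E) := Fin.natAdd n₁ e.1.2
  let L := concatBlocks ℝ n₁ n₂ (↥E → ℝ)
  let C (k : Fin m) := affineZeroSet (fun e : ↥E => Q k e.1.1 e.1.2) (a k) (b k) (c k)
  have S_subset (k : Fin m) : S k ⊆ C k ∩ L ⁻¹' productGraph row col := by
    rw [hS k]
    rintro p ⟨-, -, -, affine_eq, product_eq⟩
    exact ⟨affine_eq, (concatBlocks_mem_productGraph_iff Subtype.val p).2 product_eq⟩
  refine (Set.iInter_mono fun k => convexHull_mono (S_subset k)).trans fun p hp => ?_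
  obtain ⟨⟨⟨x, y, w⟩, H⟩, hH, rfl⟩ :=
    proj_SDP_supset_SOCP_general row col L (fun _ => convex_affineZeroSet _ _ _ _) hp
  refine ⟨(x, y, H, w), Set.mem_iInter.2 fun k => ?_, rfl⟩
  rw [hT k]
  exact Set.mem_iInter.1 hH k
end

section
/- Let n₁, n₂, m be positive integers, let E ⊆ {1,…,n₁} × {1,…,n₂}, and for each k ∈ {1,…,m} let Q_k ∈ ℝ^{n₁×n₂}, a_k ∈ ℝ^{n₁}, b_k ∈ ℝ^{n₂}, c_k ∈ ℝ. For each k, let S^k = {(x,y,w) ∈ [0,1]^{n₁+n₂+|E|} : Σ_{(i,j)∈E}(Q_k)_{ij} w_{ij} + a_kᵀx + b_kᵀy + c_k = 0 and w_{ij} = x_i y_j for all (i,j) ∈ E}, and let T^k be the set of tuples (x,y,H,w) with x ∈ ℝ^{n₁}, y ∈ ℝ^{n₂}, H ∈ ℝ^{(n₁+n₂)×(n₁+n₂)}, w ∈ ℝ^{E}, such that Σ_{(i,j)∈E}(Q_k)_{ij} w_{ij} + a_kᵀx + b_kᵀy + c_k = 0, w_{ij} = ½(H_{i,(j+n₁)}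 + H_{(j+n₁),i}) for all (i,j) ∈ E, and the block matrix [[H, z],[zᵀ, 1]] with z = (x,y) is positive semidefinite. Define S^{SDP} = ⋂_{k=1}^m T^k, S^{SOCP} = ⋂_{k=1}^m conv(S^k), and S^{QBP} = {(x,y,w) ∈ [0,1]^{n₁+n₂+|E|} : Σ_{(i,j)∈E}(Q_k)_{ij} w_{ij} + a_kᵀx + b_kᵀy + c_k = 0 for all k ∈ {1,…,m}} ∩ conv({(x,y,w) ∈ [0,1]^{n₁+n₂+|E|} : w_{ij} = x_i y_j for all (i,j) ∈ E}). Then proj_{x,y,w}(S^{SDP}) ∩ S^{QBP} ⊇ S^{SOCP}, where proj_{x,y,w} denotes the image under the map (x,y,H,w) ↦ (x,y,w). -/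
/-!
Each `conv(S^k)` lies in the `k`-th hyperplane, in the unit box, and in the convex hull of the
bilinear points `w_{ij} = x_i y_j` of the box, since the first two are convex and contain `S^k`.
It remains to lift to the semidefinite relaxation. A bilinear point lifts through the rank-one
matrix `H = z zᵀ` with `z = (x, y)`, whose bordered matrix is `(z, 1)(z, 1)ᵀ`. The points that lift
form a linear image of a convex set, so the whole convex hull of the bilinear points lifts. The
lift does not depend on `k`, so it serves all constraints at once.
-/

section ConvexHull

variable {𝕜 V : Type*} {ι : Sort*} [Semiring 𝕜] [PartialOrder 𝕜] [AddCommMonoid V] [Module 𝕜 V]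

theorem convexHull_inter_subset_of_convex {A C : Set V} (hC : Convex 𝕜 C) :
    convexHull 𝕜 (A ∩ C) ⊆ convexHull 𝕜 A ∩ C :=
  Set.subset_inter (convexHull_mono Set.inter_subset_left)
    (convexHull_min Set.inter_subset_right hC)

theorem iInter_convexHull_inter_subset [Nonempty ι] {A : Set V} {C : ι → Set V}
    (hC : ∀ k, Convex 𝕜 (C k)) :
    ⋂ k, convexHull 𝕜 (A ∩ C k) ⊆ convexHull 𝕜 A ∩ ⋂ k, C k := by
  rw [Set.inter_iInter]
  exact Set.iInter_mono fun k => convexHull_inter_subset_of_convex (hC k)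

end ConvexHull

section MomentMatrix

variable {R κ : Type*}

/-- The bordered matrix `[[H, z], [zᵀ, 1]]` of Shor's semidefinite relaxation, in which `H` stands
for the products of the entries of `z`. The border is indexed by `Unit`. -/
def momentMatrix [Zero R] [One R] (z : κ → R) (H : Matrix κ κ R) :
    Matrix (κ ⊕ Unit) (κ ⊕ Unit) R :=
  Matrix.fromBlocks H (Matrix.of fun i _ => z i) (Matrix.of fun _ j => z j) 1

theorem momentMatrix_smul_add_smul [Semiring R] {s t : R} (hst : s + t = 1) (z z' : κ → R)
    (H H' : Matrix κ κ R) :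
    momentMatrix (s • z + t • z') (s • H + t • H') =
      s • momentMatrix z H + t • momentMatrix z' H' := by
  ext (i | i) (j | j) <;> simp [momentMatrix, hst]

theorem momentMatrix_vecMulVec_self [MulZeroOneClass R] (z : κ → R) :
    momentMatrix z (Matrix.vecMulVec z z) =
      Matrix.vecMulVec (Sum.elim z 1) (Sum.elim z 1) := by
  ext (i | i) (j | j) <;> simp [momentMatrix, Matrix.vecMulVec_apply]

theorem posSemidef_momentMatrix_vecMulVec_self [Finite κ] (z : κ → ℝ) :
    (momentMatrix z (Matrix.vecMulVec z z)).PosSemidef := by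
  rw [momentMatrix_vecMulVec_self]
  exact Matrix.posSemidef_vecMulVec_self_star _

end MomentMatrix

section BilinearPoints

variable {α β : Type*} (E : Finset (α × β))

/-- The space of triples `(x, y, w)`, where `w` has one coordinate for each edge in `E`. -/
abbrev BilinearSpace : Type _ := (α → ℝ) × (β → ℝ) × (E → ℝ)

/-- The unit box `[0, 1]^{α + β + E}`. -/
def unitBox : Set (BilinearSpace E) :=
  Set.univ.pi (fun _ => Set.Icc 0 1) ×ˢ
    Set.univ.pi (fun _ => Set.Icc 0 1) ×ˢ Set.univ.pi (fun _ => Set.Icc 0 1)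

/-- The nonconvex set of points with `w_{ij} = x_i y_j` on every edge, which all the relaxations
approximate. -/
def bilinearPoints : Set (BilinearSpace E) :=
  {p | ∀ e : E, p.2.2 e = p.1 e.1.1 * p.2.1 e.1.2}

theorem convex_unitBox : Convex ℝ (unitBox E) :=
  (convex_pi fun _ _ => convex_Icc 0 1).prod
    ((convex_pi fun _ _ => convex_Icc 0 1).prod (convex_pi fun _ _ => convex_Icc 0 1))

variable {E} [Fintype α] [Fintype β]

/-- The hyperplane `qᵀw + aᵀx + bᵀy + c = 0` cut out by one linearized bilinear equation. -/
def linearizedConstraint (q : E → ℝ) (a : α → ℝ) (b : β → ℝ) (c : ℝ) : Set (BilinearSpace E) :=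
  {p | q ⬝ᵥ p.2.2 + a ⬝ᵥ p.1 + b ⬝ᵥ p.2.1 + c = 0}

theorem convex_linearizedConstraint (q : E → ℝ) (a : α → ℝ) (b : β → ℝ) (c : ℝ) :
    Convex ℝ (linearizedConstraint q a b c) := by
  have isLinearMap : IsLinearMap ℝ fun p : BilinearSpace E =>
      q ⬝ᵥ p.2.2 + a ⬝ᵥ p.1 + b ⬝ᵥ p.2.1 :=
    { map_add p p' := by
        simp only [Prod.fst_add, Prod.snd_add, dotProduct_add]
        ring
      map_smul s p := by
        simp only [Prod.smul_fst, Prod.smul_snd, dotProduct_smul, smul_add] }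
  simpa only [linearizedConstraint, eq_neg_iff_add_eq_zero] using convex_hyperplane isLinearMap (-c)

end BilinearPoints

section SemidefiniteLift

variable {n₁ n₂ : ℕ} (E : Finset (Fin n₁ × Fin n₂))

/-- The space of tuples `(x, y, H, w)` in which the semidefinite relaxation lives. -/
abbrev LiftedSpace : Type _ :=
  (Fin n₁ → ℝ) × (Fin n₂ → ℝ) × Matrix (Fin (n₁ + n₂)) (Fin (n₁ + n₂)) ℝ × (E → ℝ)

/-- The projection `proj_{x,y,w}` forgetting the matrix variable. -/
def forgetMatrix : LiftedSpace E → BilinearSpace E :=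
  fun p => (p.1, p.2.1, p.2.2.2)

/-- The constraints shared by all the sets `T^k`: `w` consists of entries of the symmetric part
of `H`, and the moment matrix of `z = (x, y)` and `H` is positive semidefinite. -/
def semidefiniteLift : Set (LiftedSpace E) :=
  {p | (∀ e : E, p.2.2.2 e =
      (p.2.2.1 (Fin.castAdd n₂ e.1.1) (Fin.natAdd n₁ e.1.2) +
        p.2.2.1 (Fin.natAdd n₁ e.1.2) (Fin.castAdd n₂ e.1.1)) / 2) ∧
    (momentMatrix (Fin.append p.1 p.2.1) p.2.2.1).PosSemidef}

theorem isLinearMap_forgetMatrix : IsLinearMap ℝ (forgetMatrix E) :=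
  ⟨fun _ _ => rfl, fun _ _ => rfl⟩

theorem append_smul_add_smul {R : Type*} [Semiring R] (s t : R) (x x' : Fin n₁ → R)
    (y y' : Fin n₂ → R) :
    Fin.append (s • x + t • x') (s • y + t • y') =
      s • Fin.append x y + t • Fin.append x' y' := by
  ext i
  refine Fin.addCases (fun i => ?_) (fun j => ?_) i <;> simp

theorem convex_semidefiniteLift : Convex ℝ (semidefiniteLift E) := by
  rintro p ⟨hw, hH⟩ p' ⟨hw', hH'⟩ s t hs ht hst
  refine ⟨fun e => ?_, ?_⟩
  · simp only [Prod.snd_add, Prod.fst_add, Prod.smul_snd, Prod.smul_fst, Pi.add_apply,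
      Pi.smul_apply, Matrix.add_apply, Matrix.smul_apply, smul_eq_mul]
    linear_combination s * hw e + t * hw' e
  · simp only [Prod.snd_add, Prod.fst_add, Prod.smul_snd, Prod.smul_fst, append_smul_add_smul,
      momentMatrix_smul_add_smul hst]
    exact (hH.smul hs).add (hH'.smul ht)

theorem bilinearPoints_subset_image_semidefiniteLift :
    bilinearPoints E ⊆ forgetMatrix E '' semidefiniteLift E := by
  rintro ⟨x, y, w⟩ hw
  let z := Fin.append x y
  refine ⟨(x, y, Matrix.vecMulVec z z, w),
    ⟨fun e => ?_, posSemidef_momentMatrix_vecMulVec_self z⟩, rfl⟩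
  have hwe : w e = x e.1.1 * y e.1.2 := hw e
  simp only [hwe, z, Matrix.vecMulVec_apply, Fin.append_left, Fin.append_right]
  ring

theorem convexHull_bilinearPoints_subset_image_semidefiniteLift :
    convexHull ℝ (bilinearPoints E) ⊆ forgetMatrix E '' semidefiniteLift E :=
  convexHull_min (bilinearPoints_subset_image_semidefiniteLift E)
    ((convex_semidefiniteLift E).is_linear_image (isLinearMap_forgetMatrix E))

end SemidefiniteLift

theorem proj_SDP_inter_QBP_supset_SOCP_general {ι : Sort*} [Nonempty ι] {n₁ n₂ : ℕ}
    (E : Finset (Fin n₁ × Fin n₂)) {C : ι → Set (BilinearSpace E)} (hC : ∀ k, Convex ℝ (C k)) :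
    ⋂ k, convexHull ℝ (unitBox E ∩ C k ∩ bilinearPoints E) ⊆
      (forgetMatrix E '' ⋂ k, forgetMatrix E ⁻¹' C k ∩ semidefiniteLift E) ∩
        ((unitBox E ∩ ⋂ k, C k) ∩ convexHull ℝ (unitBox E ∩ bilinearPoints E)) := by
  simp only [Set.inter_right_comm (unitBox E) (C _) (bilinearPoints E)]
  intro p hp
  obtain ⟨mem_hull, mem_constraints⟩ := iInter_convexHull_inter_subset hC hp
  have mem_box : p ∈ unitBox E :=
    convexHull_min Set.inter_subset_left (convex_unitBox E) mem_hull
  obtain ⟨P, P_mem_lift, rfl⟩ := convexHull_bilinearPoints_subset_image_semidefiniteLift E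
    (convexHull_mono Set.inter_subset_right mem_hull)
  have P_mem_SDP : P ∈ ⋂ k, forgetMatrix E ⁻¹' C k ∩ semidefiniteLift E :=
    Set.mem_iInter.2 fun k => ⟨Set.mem_iInter.1 mem_constraints k, P_mem_lift⟩
  exact ⟨⟨P, P_mem_SDP, rfl⟩, ⟨mem_box, mem_constraints⟩, mem_hull⟩

/-- **Theorem 2.** The intersection of the projected SDP relaxation with the
Boolean-quadric-polytope relaxation contains the SOCP relaxation:
`proj_{x,y,w}(S^{SDP}) ∩ S^{QBP} ⊇ S^{SOCP}`. -/
theorem proj_SDP_inter_QBP_supset_SOCP (n₁ n₂ m : ℕ) (hn₁ : 0 < n₁) (hn₂ : 0 < n₂) (hm : 0 < m)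
    (E : Finset (Fin n₁ × Fin n₂))
    (Q : Fin m → Matrix (Fin n₁) (Fin n₂) ℝ) (a : Fin m → Fin n₁ → ℝ)
    (b : Fin m → Fin n₂ → ℝ) (c : Fin m → ℝ)
    (S : Fin m → Set ((Fin n₁ → ℝ) × (Fin n₂ → ℝ) × (↥E → ℝ)))
    (hS : ∀ k, S k = {p | (∀ i, p.1 i ∈ Set.Icc (0:ℝ) 1) ∧ (∀ j, p.2.1 j ∈ Set.Icc (0:ℝ) 1) ∧
        (∀ e : ↥E, p.2.2 e ∈ Set.Icc (0:ℝ) 1) ∧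
        (∑ e : ↥E, Q k (e : Fin n₁ × Fin n₂).1 (e : Fin n₁ × Fin n₂).2 * p.2.2 e) +
          (∑ i, a k i * p.1 i) + (∑ j, b k j * p.2.1 j) + c k = 0 ∧
        ∀ e : ↥E, p.2.2 e = p.1 (e : Fin n₁ × Fin n₂).1 * p.2.1 (e : Fin n₁ × Fin n₂).2})
    (T : Fin m → Set ((Fin n₁ → ℝ) × (Fin n₂ → ℝ) ×
        Matrix (Fin (n₁ + n₂)) (Fin (n₁ + n₂)) ℝ × (↥E → ℝ)))
    (hT : ∀ k, T k = {p | (∑ e : ↥E, Q k (e : Fin n₁ × Fin n₂).1 (e : Fin n₁ × Fin n₂).2 *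
            p.2.2.2 e) + (∑ i, a k i * p.1 i) + (∑ j, b k j * p.2.1 j) + c k = 0 ∧
        (∀ e : ↥E, p.2.2.2 e = (p.2.2.1 (Fin.castAdd n₂ (e : Fin n₁ × Fin n₂).1)
            (Fin.natAdd n₁ (e : Fin n₁ × Fin n₂).2) +
          p.2.2.1 (Fin.natAdd n₁ (e : Fin n₁ × Fin n₂).2)
            (Fin.castAdd n₂ (e : Fin n₁ × Fin n₂).1)) / 2) ∧
        (Matrix.fromBlocks p.2.2.1
          (Matrix.of fun i (_ : Unit) => Fin.append p.1 p.2.1 i)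
          (Matrix.of fun (_ : Unit) j => Fin.append p.1 p.2.1 j)
          (1 : Matrix Unit Unit ℝ)).PosSemidef}) :
    (⋂ k, convexHull ℝ (S k)) ⊆
      ((fun p : (Fin n₁ → ℝ) × (Fin n₂ → ℝ) ×
            Matrix (Fin (n₁ + n₂)) (Fin (n₁ + n₂)) ℝ × (↥E → ℝ) =>
          (p.1, p.2.1, p.2.2.2)) '' ⋂ k, T k) ∩
        (({p : (Fin n₁ → ℝ) × (Fin n₂ → ℝ) × (↥E → ℝ) |
            (∀ i, p.1 i ∈ Set.Icc (0:ℝ) 1) ∧ (∀ j, p.2.1 j ∈ Set.Icc (0:ℝ) 1) ∧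
            (∀ e : ↥E, p.2.2 e ∈ Set.Icc (0:ℝ) 1) ∧
            ∀ k, (∑ e : ↥E, Q k (e : Fin n₁ × Fin n₂).1 (e : Fin n₁ × Fin n₂).2 * p.2.2 e) +
              (∑ i, a k i * p.1 i) + (∑ j, b k j * p.2.1 j) + c k = 0} ∩
          convexHull ℝ {p : (Fin n₁ → ℝ) × (Fin n₂ → ℝ) × (↥E → ℝ) |
            (∀ i, p.1 i ∈ Set.Icc (0:ℝ) 1) ∧ (∀ j, p.2.1 j ∈ Set.Icc (0:ℝ) 1) ∧
            (∀ e : ↥E, p.2.2 e ∈ Set.Icc (0:ℝ) 1) ∧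
            ∀ e : ↥E, p.2.2 e = p.1 (e : Fin n₁ × Fin n₂).1 *
              p.2.1 (e : Fin n₁ × Fin n₂).2})) := by
  have : Nonempty (Fin m) := ⟨⟨0, hm⟩⟩
  have inclusion := proj_SDP_inter_QBP_supset_SOCP_general E fun k =>
    convex_linearizedConstraint (fun e : E => Q k e.1.1 e.1.2) (a k) (b k) (c k)
  simpa only [hS, hT, unitBox, bilinearPoints, linearizedConstraint, forgetMatrix,
    semidefiniteLift, momentMatrix, dotProduct, Set.inter_def, Set.image, Set.preimage,
    Set.mem_iInter, Set.mem_prod, Set.mem_univ_pi, Set.mem_ofPred_eq, and_assoc]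
    using inclusion
end
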